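/- arXiv:1505.06936 — 4 statements merged into one kernel-verified Lean document; each statement's English description precedes it below -/
import Mathlib

section
/- Let F be a Finsler function on ℝⁿ. Then (ℝⁿ, F) is projectively flat — i.e. there exists a smooth diffeomorphism ψ of ℝⁿ onto an open subset of ℝⁿ such that for every geodesic γ : I → ℝⁿ of (ℝⁿ, F) there are a C² function f : I → ℝ with everywhere positive derivative and vectors a, b ∈ ℝⁿ, a ≠ 0, with ψ(γ(t)) = f(t)·a + b for all t — if and only if there exists a smooth diffeomorphism φ of ℝⁿ onto an open subset of ℝⁿ solving the second-order PDE system: for all x ∈ ℝⁿ, all y ≠ 0 and all i, ∑_s ∂²F/∂x^s∂y^i(x,y)·y^s − ∑_s ∂²F/∂x^i∂y^s(x,y)·y^s = ∑_{s,k,l,r} ∂²F̄/∂ȳ^r∂ȳ^l(φ(x), Dφ(x)·y) · [ (∂²φ^l/∂x^s∂x^k)(x)·(∂φ^r/∂x^i)(x) − (∂²φ^l/∂x^i∂x^k)(x)·(∂φ^r/∂x^s)(x) ] · y^s·y^k, where F̄ denotes the expression of F in the φ-coordinates. -/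
open scoped BigOperators Topology
noncomputable section

abbrev E (n : ℕ) := Fin n → ℝ

/-- Partial derivative with respect to the base coordinate `x^i`. -/
def pdx {n : ℕ} (i : Fin n) (f : E n × E n → ℝ) (p : E n × E n) : ℝ :=
  fderiv ℝ f p (Pi.single i 1, 0)

/-- Partial derivative with respect to the fibre coordinate `y^i`. -/
def pdy {n : ℕ} (i : Fin n) (f : E n × E n → ℝ) (p : E n × E n) : ℝ :=
  fderiv ℝ f p (0, Pi.single i 1)

/-- A Finsler function on `ℝⁿ`. -/
structure IsFinsler {n : ℕ} (F : E n × E n → ℝ) : Prop where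
  smooth : ContDiffOn ℝ (⊤ : ℕ∞) F {p : E n × E n | p.2 ≠ 0}
  homog : ∀ (x y : E n) (c : ℝ), 0 < c → F (x, c • y) = c * F (x, y)
  pos : ∀ (x y : E n), y ≠ 0 → 0 < F (x, y)
  posDef : ∀ (x y : E n), y ≠ 0 →
    (Matrix.of fun i j : Fin n =>
      (1 / 2) * pdy i (pdy j (fun p => F p ^ 2)) (x, y)).PosDef

/-- A geodesic of `(ℝⁿ, F)`: a `C²` curve on a nontrivial open interval, with nowhere
vanishing velocity, positive constant speed, satisfying the Euler–Lagrange equations. -/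
structure IsGeodesic {n : ℕ} (F : E n × E n → ℝ) (γ : ℝ → E n) (t₁ t₂ : ℝ) : Prop where
  lt : t₁ < t₂
  smooth : ContDiffOn ℝ 2 γ (Set.Ioo t₁ t₂)
  vel : ∀ t ∈ Set.Ioo t₁ t₂, deriv γ t ≠ 0
  constSpeed : ∃ c : ℝ, 0 < c ∧ ∀ t ∈ Set.Ioo t₁ t₂, F (γ t, deriv γ t) = c
  eulerLagrange : ∀ (i : Fin n), ∀ t ∈ Set.Ioo t₁ t₂,
    deriv (fun s => pdy i F (γ s, deriv γ s)) t = pdx i F (γ t, deriv γ t)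

/-- The Hamel equations in the standard coordinates. -/
def SatisfiesHamel {n : ℕ} (F : E n × E n → ℝ) : Prop :=
  ∀ (x y : E n), y ≠ 0 → ∀ i : Fin n,
    ∑ k, pdx k (pdy i F) (x, y) * y k = ∑ k, pdx i (pdy k F) (x, y) * y k

/-- `(ℝⁿ, F)` is rectilinear in the standard coordinates. -/
def Rectilinear {n : ℕ} (F : E n × E n → ℝ) : Prop :=
  ∀ (γ : ℝ → E n) (t₁ t₂ : ℝ), IsGeodesic F γ t₁ t₂ →
    ∃ (f : ℝ → ℝ) (a b : E n), a ≠ 0 ∧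
      ContDiffOn ℝ 2 f (Set.Ioo t₁ t₂) ∧
      (∀ t ∈ Set.Ioo t₁ t₂, 0 < deriv f t) ∧
      ∀ t ∈ Set.Ioo t₁ t₂, γ t = f t • a + b

/-- `∂φ^m/∂x^s` : entry `m` of the Jacobian of `φ` applied to the `s`-th basis vector. -/
def Dphi {n : ℕ} (φ : E n → E n) (x : E n) (s m : Fin n) : ℝ :=
  fderiv ℝ φ x (Pi.single s 1) m

/-- `∂²φ^l/∂x^s∂x^k`. -/
def D2phi {n : ℕ} (φ : E n → E n) (x : E n) (s k l : Fin n) : ℝ :=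
  fderiv ℝ (fun x' => fderiv ℝ φ x' (Pi.single k 1) l) x (Pi.single s 1)

/-- `(ℝⁿ, F)` is projectively flat: a smooth diffeomorphism onto an open subset of `ℝⁿ`
takes all geodesics into straight lines (up to orientation-preserving reparametrization). -/
def ProjFlat {n : ℕ} (F : E n × E n → ℝ) : Prop :=
  ∃ ψ ψinv : E n → E n,
    ContDiff ℝ (⊤ : ℕ∞) ψ ∧ IsOpen (Set.range ψ) ∧ ContDiffOn ℝ (⊤ : ℕ∞) ψinv (Set.range ψ) ∧
    (∀ x : E n, ψinv (ψ x) = x) ∧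
    ∀ (γ : ℝ → E n) (t₁ t₂ : ℝ), IsGeodesic F γ t₁ t₂ →
      ∃ (f : ℝ → ℝ) (a b : E n), a ≠ 0 ∧
        ContDiffOn ℝ 2 f (Set.Ioo t₁ t₂) ∧
        (∀ t ∈ Set.Ioo t₁ t₂, 0 < deriv f t) ∧
        ∀ t ∈ Set.Ioo t₁ t₂, ψ (γ t) = f t • a + b


/-! ### General calculus helpers -/

lemma hasDerivAt_fderiv_curve {V W : Type*} [NormedAddCommGroup V] [NormedSpace ℝ V]
    [NormedAddCommGroup W] [NormedSpace ℝ W] {f : V → W} {c : ℝ → V} {c' : V} {t : ℝ}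
    (hf : ContDiffAt ℝ 2 f (c t)) (hc : HasDerivAt c c' t) (b : V) :
    HasDerivAt (fun s => fderiv ℝ f (c s) b) (fderiv ℝ (fderiv ℝ f) (c t) c' b) t := by
  have h1 : DifferentiableAt ℝ (fderiv ℝ f) (c t) :=
    (hf.fderiv_right (m := 1) (by norm_num)).differentiableAt (by norm_num)
  have h2 := h1.hasFDerivAt.comp_hasDerivAt t hc
  have h3 := h2.clm_apply (hasDerivAt_const t b)
  simpa using h3

lemma hasDerivAt_fderiv_curve' {V W : Type*} [NormedAddCommGroup V] [NormedSpace ℝ V]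
    [NormedAddCommGroup W] [NormedSpace ℝ W] {f : V → W} {c : ℝ → V} {c' : V} {t : ℝ}
    {v : ℝ → V} {v' : V}
    (hf : ContDiffAt ℝ 2 f (c t)) (hc : HasDerivAt c c' t) (hv : HasDerivAt v v' t) :
    HasDerivAt (fun s => fderiv ℝ f (c s) (v s))
      (fderiv ℝ (fderiv ℝ f) (c t) c' (v t) + fderiv ℝ f (c t) v') t := by
  have h1 : DifferentiableAt ℝ (fderiv ℝ f) (c t) :=
    (hf.fderiv_right (m := 1) (by norm_num)).differentiableAt (by norm_num)
  exact (h1.hasFDerivAt.comp_hasDerivAt t hc).clm_apply hv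

lemma fderiv_fderiv_apply {V W : Type*} [NormedAddCommGroup V] [NormedSpace ℝ V]
    [NormedAddCommGroup W] [NormedSpace ℝ W] {f : V → W} {p : V}
    (hf : ContDiffAt ℝ 2 f p) (a b : V) :
    fderiv ℝ (fun q => fderiv ℝ f q a) p b = fderiv ℝ (fderiv ℝ f) p b a := by
  have h1 : DifferentiableAt ℝ (fderiv ℝ f) p :=
    (hf.fderiv_right (m := 1) (by norm_num)).differentiableAt (by norm_num)
  have := (h1.hasFDerivAt.clm_apply (hasFDerivAt_const a p)).fderiv
  rw [this]; simp

lemma d2_symm {V : Type*} [NormedAddCommGroup V] [NormedSpace ℝ V] {f : V → ℝ} {p : V}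
    (hf : ContDiffAt ℝ 2 f p) (a b : V) :
    fderiv ℝ (fderiv ℝ f) p a b = fderiv ℝ (fderiv ℝ f) p b a :=
  hf.isSymmSndFDerivAt (by simp) a b

lemma sum_single {n : ℕ} {W : Type*} [AddCommGroup W] [Module ℝ W]
    (T : E n →ₗ[ℝ] W) (y : E n) : ∑ s, y s • T (Pi.single s 1) = T y := by
  conv_rhs => rw [pi_eq_sum_univ' y]
  rw [map_sum]
  refine Finset.sum_congr rfl fun s _ => ?_
  rw [← map_smul]

lemma isOpen_U (n : ℕ) : IsOpen {p : E n × E n | p.2 ≠ 0} :=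
  isOpen_ne_fun continuous_snd continuous_const

namespace IsFinsler
variable {n : ℕ} {F : E n × E n → ℝ}

lemma cd (hF : IsFinsler F) {p : E n × E n} (hp : p.2 ≠ 0) : ContDiffAt ℝ (⊤ : ℕ∞) F p :=
  hF.smooth.contDiffAt ((isOpen_U n).mem_nhds hp)

lemma cd2 (hF : IsFinsler F) {p : E n × E n} (hp : p.2 ≠ 0) : ContDiffAt ℝ 2 F p :=
  (hF.cd hp).of_le (WithTop.coe_le_coe.2 (le_top (a := (2 : ℕ∞))))

lemma hfd (hF : IsFinsler F) {p : E n × E n} (hp : p.2 ≠ 0) :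
    HasFDerivAt F (fderiv ℝ F p) p :=
  ((hF.cd2 hp).differentiableAt (by norm_num)).hasFDerivAt

lemma zero_right (hF : IsFinsler F) (x : E n) : F (x, 0) = 0 := by
  have := hF.homog x 0 2 (by norm_num)
  simp at this; linarith

/-- Scaling of the first derivative. -/
lemma fderiv_scale (hF : IsFinsler F) {x y : E n} (hy : y ≠ 0) {c : ℝ} (hc : 0 < c)
    (a b : E n) : fderiv ℝ F (x, c • y) (a, c • b) = c * fderiv ℝ F (x, y) (a, b) := by
  have h1 : HasDerivAt (fun t : ℝ => ((x + t • a, c • (y + t • b)) : E n × E n)) (a, c • b) 0 := by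
    have ha : HasDerivAt (fun t : ℝ => x + t • a) a 0 := by
      simpa using ((hasDerivAt_id (0:ℝ)).smul_const a).const_add x
    have hb : HasDerivAt (fun t : ℝ => c • (y + t • b)) (c • b) 0 := by
      have := (((hasDerivAt_id (0:ℝ)).smul_const b).const_add y).const_smul c
      rw [one_smul] at this
      exact this
    exact ha.prodMk hb
  have h2 : HasDerivAt (fun t : ℝ => ((x + t • a, (y + t • b)) : E n × E n)) (a, b) 0 := by
    have ha : HasDerivAt (fun t : ℝ => x + t • a) a 0 := by
      simpa using ((hasDerivAt_id (0:ℝ)).smul_const a).const_add x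
    have hb : HasDerivAt (fun t : ℝ => (y + t • b)) (b) 0 := by
      simpa using (((hasDerivAt_id (0:ℝ)).smul_const b).const_add y)
    exact ha.prodMk hb
  have hcy : c • y ≠ 0 := smul_ne_zero hc.ne' hy
  have e1 := HasFDerivAt.comp_hasDerivAt_of_eq (0:ℝ) (hF.hfd (p := (x, c • y)) hcy) h1 (by simp)
  have e2 := HasFDerivAt.comp_hasDerivAt_of_eq (0:ℝ) (hF.hfd (p := (x, y)) hy) h2 (by simp)
  have e3 := e2.const_mul c
  refine e1.unique (e3.congr_of_eventuallyEq (Filter.Eventually.of_forall fun t => ?_))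
  exact hF.homog _ _ c hc

/-- Euler's identity. -/
lemma euler (hF : IsFinsler F) {x y : E n} (hy : y ≠ 0) :
    fderiv ℝ F (x, y) (0, y) = F (x, y) := by
  have h1 : HasDerivAt (fun t : ℝ => ((x, t • y) : E n × E n)) (0, y) 1 := by
    have hb : HasDerivAt (fun t : ℝ => t • y) y 1 := by
      simpa using (hasDerivAt_id (1:ℝ)).smul_const y
    exact (hasDerivAt_const _ _).prodMk hb
  have e1 := HasFDerivAt.comp_hasDerivAt_of_eq (1:ℝ) (hF.hfd (p := (x, y)) hy) h1 (by simp)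
  have e2 : HasDerivAt (fun t : ℝ => t * F (x, y)) (F (x, y)) 1 := by
    simpa using (hasDerivAt_id (1:ℝ)).mul_const (F (x, y))
  refine e1.unique (e2.congr_of_eventuallyEq ?_)
  filter_upwards [lt_mem_nhds (zero_lt_one (α := ℝ))] with t ht
  exact hF.homog _ _ t ht

lemma d2_euler (hF : IsFinsler F) {x y : E n} (hy : y ≠ 0) (a b : E n) :
    fderiv ℝ (fderiv ℝ F) (x, y) (0, y) (a, b) = fderiv ℝ F (x, y) (a, 0) := by
  have h1 : HasDerivAt (fun t : ℝ => ((x, t • y) : E n × E n)) (0, y) 1 := by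
    have hb : HasDerivAt (fun t : ℝ => t • y) y 1 := by
      simpa using (hasDerivAt_id (1:ℝ)).smul_const y
    exact (hasDerivAt_const _ _).prodMk hb
  have e1 := hasDerivAt_fderiv_curve (f := F) (c := fun t : ℝ => ((x, t • y) : E n × E n))
    (t := 1) (hF.cd2 (by simpa using hy)) h1 (a, b)
  simp only [one_smul] at e1
  have e2 : HasDerivAt (fun t : ℝ => t * fderiv ℝ F (x, y) (a, 0) + fderiv ℝ F (x, y) (0, b))
      (fderiv ℝ F (x, y) (a, 0)) 1 := by
    simpa using ((hasDerivAt_id (1:ℝ)).mul_const (fderiv ℝ F (x, y) (a, 0))).add_const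
      (fderiv ℝ F (x, y) (0, b))
  refine e1.unique (e2.congr_of_eventuallyEq ?_)
  filter_upwards [lt_mem_nhds (zero_lt_one (α := ℝ))] with t ht
  have e3 := hF.fderiv_scale (x := x) hy ht a 0
  have e4 := hF.fderiv_scale (x := x) hy ht 0 b
  have e5 : ((a, b) : E n × E n) = (a, t • 0) + t⁻¹ • (0, t • b) := by
    simp [smul_smul, inv_mul_cancel₀ ht.ne']
  rw [e5, map_add, map_smul, e3, e4, smul_eq_mul, inv_mul_cancel_left₀ ht.ne']

/-- The fundamental tensor as a bilinear form. -/
lemma pos_form (hF : IsFinsler F) {x y : E n} (hy : y ≠ 0) {v : E n} (hv : v ≠ 0) :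
    0 < F (x, y) * fderiv ℝ (fderiv ℝ F) (x, y) (0, v) (0, v)
      + fderiv ℝ F (x, y) (0, v) * fderiv ℝ F (x, y) (0, v) := by
  have hcd := hF.cd2 (p := (x, y)) hy
  have h := (hF.posDef x y hy).dotProduct_mulVec_pos hv
  have key : ∀ i j, pdy i (pdy j (fun p => F p ^ 2)) (x, y) =
      2 * (F (x, y) * fderiv ℝ (fderiv ℝ F) (x, y) (0, Pi.single i 1) (0, Pi.single j 1)
      + fderiv ℝ F (x, y) (0, Pi.single i 1) * fderiv ℝ F (x, y) (0, Pi.single j 1)) := by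
    intro i j
    have h1 : pdy j (fun p => F p ^ 2) =ᶠ[𝓝 (x, y)]
        fun p => 2 * (F p * fderiv ℝ F p (0, Pi.single j 1)) := by
      filter_upwards [(isOpen_U n).mem_nhds (x := (x, y)) hy] with p hp
      unfold pdy
      rw [((hF.hfd hp).pow 2).fderiv]
      simp; ring
    have h2 : DifferentiableAt ℝ (fun q => fderiv ℝ F q (0, Pi.single j 1)) (x, y) := by
      have : DifferentiableAt ℝ (fderiv ℝ F) (x, y) :=
        (hcd.fderiv_right (m := 1) (by norm_num)).differentiableAt (by norm_num)
      exact this.clm_apply (differentiableAt_const _)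
    have h3 : HasFDerivAt (fun p => 2 * (F p * fderiv ℝ F p (0, Pi.single j 1))) _ (x, y) :=
      ((hF.hfd (p := (x, y)) hy).mul h2.hasFDerivAt).const_mul 2
    unfold pdy at h1 ⊢
    rw [h1.fderiv_eq, h3.fderiv]
    simp [fderiv_fderiv_apply hcd]
    ring
  have e1 : ∀ T : E n × E n →L[ℝ] ℝ, ∀ w : E n,
      ∑ s, w s * T (0, Pi.single s 1) = T (0, w) := fun T w => by
    simpa using sum_single (T.toLinearMap ∘ₗ LinearMap.inr ℝ (E n) (E n)) w
  have e2 : ∀ T : E n × E n →L[ℝ] E n × E n →L[ℝ] ℝ, ∀ (w : E n) (z : E n × E n),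
      ∑ s, w s * T (0, Pi.single s 1) z = T (0, w) z := fun T w z => by
    simpa using e1 ((ContinuousLinearMap.flip T) z) w
  have e3 : ∀ i, ((Matrix.of fun i j => 1 / 2 * pdy i (pdy j fun p => F p ^ 2) (x, y)).mulVec v) i
      = F (x, y) * fderiv ℝ (fderiv ℝ F) (x, y) (0, Pi.single i 1) (0, v)
        + fderiv ℝ F (x, y) (0, Pi.single i 1) * fderiv ℝ F (x, y) (0, v) := by
    intro i
    simp only [dotProduct, Matrix.mulVec, Matrix.of_apply, key]
    rw [← e1 _ v, ← e1 (fderiv ℝ F (x, y)) v, Finset.mul_sum, Finset.mul_sum,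
      ← Finset.sum_add_distrib]
    refine Finset.sum_congr rfl fun j _ => ?_
    ring
  refine h.trans_eq ?_
  rw [dotProduct]
  simp only [e3]
  rw [← e2 _ v, ← e1 (fderiv ℝ F (x, y)) v, Finset.mul_sum, Finset.sum_mul,
      ← Finset.sum_add_distrib]
  refine Finset.sum_congr rfl fun j _ => ?_
  rw [Pi.star_apply, star_trivial]
  ring

lemma ker_form (hF : IsFinsler F) {x y : E n} (hy : y ≠ 0) {v : E n}
    (hv : ∀ b, fderiv ℝ (fderiv ℝ F) (x, y) (0, v) (0, b) = 0) :
    ∃ c : ℝ, v = c • y := by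
  refine ⟨fderiv ℝ F (x, y) (0, v) / F (x, y), ?_⟩
  set c := fderiv ℝ F (x, y) (0, v) / F (x, y) with hc
  have hpos := hF.pos x y hy
  by_contra hne
  have h := hF.pos_form (x := x) hy (sub_ne_zero.2 hne)
  have e : ((0, v - c • y) : E n × E n) = (0, v) - c • (0, y) := by simp
  have e1 : fderiv ℝ F (x, y) (0, v - c • y) = 0 := by
    rw [e, map_sub, map_smul, hF.euler hy, hc]
    rw [smul_eq_mul, div_mul_cancel₀ _ hpos.ne', sub_self]
  have e2 : ∀ b, fderiv ℝ (fderiv ℝ F) (x, y) (0, v - c • y) (0, b) = 0 := by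
    intro b
    rw [e, map_sub, map_smul, _root_.sub_apply, _root_.smul_apply, hv,
      hF.d2_euler hy, ← Prod.zero_eq_mk]
    simp
  rw [e1, e2] at h
  simp at h

end IsFinsler

/-! ### Existence of geodesics -/

namespace IsFinsler
variable {n : ℕ} {F : E n × E n → ℝ}

/-- Restriction of a covector on `E × E` to the vertical part. -/
def RR (n : ℕ) : (E n × E n →L[ℝ] ℝ) →L[ℝ] (E n →L[ℝ] ℝ) :=
  (ContinuousLinearMap.compL ℝ (E n) (E n × E n) ℝ).flip (ContinuousLinearMap.inr ℝ (E n) (E n))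

/-- Restriction of a covector on `E × E` to the horizontal part. -/
def LL (n : ℕ) : (E n × E n →L[ℝ] ℝ) →L[ℝ] (E n →L[ℝ] ℝ) :=
  (ContinuousLinearMap.compL ℝ (E n) (E n × E n) ℝ).flip (ContinuousLinearMap.inl ℝ (E n) (E n))

lemma RR_apply (T : E n × E n →L[ℝ] ℝ) (b : E n) : RR n T b = T (0, b) := by simp [RR]
lemma LL_apply (T : E n × E n →L[ℝ] ℝ) (b : E n) : LL n T b = T (b, 0) := by simp [LL]

/-- The fundamental tensor. -/
def gB (F : E n × E n → ℝ) (p : E n × E n) : E n →L[ℝ] E n →L[ℝ] ℝ :=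
  F p • ((RR n).comp ((fderiv ℝ (fderiv ℝ F) p).comp (ContinuousLinearMap.inr ℝ (E n) (E n))))
   + (RR n (fderiv ℝ F p)).smulRight (RR n (fderiv ℝ F p))

def gR (F : E n × E n → ℝ) (p : E n × E n) : E n →L[ℝ] ℝ :=
  - (F p • (RR n (fderiv ℝ (fderiv ℝ F) p (p.2, 0)) - LL n (fderiv ℝ F p)))
   - (fderiv ℝ F p (p.2, 0)) • RR n (fderiv ℝ F p)

lemma gB_apply (p : E n × E n) (v b : E n) : gB F p v b =
    F p * fderiv ℝ (fderiv ℝ F) p (0, v) (0, b) + fderiv ℝ F p (0, v) * fderiv ℝ F p (0, b) := by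
  simp [gB, RR_apply]

lemma gR_apply (p : E n × E n) (b : E n) : gR F p b =
    - (F p * (fderiv ℝ (fderiv ℝ F) p (p.2, 0) (0, b) - fderiv ℝ F p (b, 0)))
      - fderiv ℝ F p (p.2, 0) * fderiv ℝ F p (0, b) := by
  simp [gR, RR_apply, LL_apply]

/-- The spray. -/
def gZ (F : E n × E n → ℝ) (p : E n × E n) : E n := (gB F p).inverse (gR F p)

lemma gB_inv (hF : IsFinsler F) {p : E n × E n} (hp : p.2 ≠ 0) : (gB F p).IsInvertible := by
  obtain ⟨x, y⟩ := p
  have hinj : Function.Injective (gB F (x, y)).toLinearMap := by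
    rw [← LinearMap.ker_eq_bot, LinearMap.ker_eq_bot']
    intro v hv
    by_contra hne
    have h1 := hF.pos_form (x := x) hp hne
    rw [← gB_apply] at h1
    have : gB F (x, y) v = 0 := hv
    simp [this] at h1
  have hfin : Module.finrank ℝ (E n) = Module.finrank ℝ (E n →L[ℝ] ℝ) := by
    rw [(LinearMap.toContinuousLinearMap (𝕜 := ℝ) (E := E n) (F' := ℝ)).symm.finrank_eq]
    exact (Subspace.dual_finrank_eq (K := ℝ) (V := E n)).symm
  refine ⟨(LinearEquiv.ofInjectiveOfFinrankEq _ hinj hfin).toContinuousLinearEquiv, ?_⟩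
  ext; rfl

lemma gZ_spec (hF : IsFinsler F) {p : E n × E n} (hp : p.2 ≠ 0) : gB F p (gZ F p) = gR F p :=
  ContinuousLinearMap.IsInvertible.self_apply_inverse (hF.gB_inv hp) _

lemma gZ_cd (hF : IsFinsler F) {p : E n × E n} (hp : p.2 ≠ 0) : ContDiffAt ℝ 1 (gZ F) p := by
  have h0 : ContDiffAt ℝ 1 F p := (hF.cd2 hp).of_le (by norm_num)
  have h1 : ContDiffAt ℝ 2 (fderiv ℝ F) p :=
    (hF.cd hp).fderiv_right (WithTop.coe_le_coe.2 (le_top (a := (3 : ℕ∞))))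
  have h2 : ContDiffAt ℝ 1 (fderiv ℝ (fderiv ℝ F)) p := h1.fderiv_right (by norm_num)
  have h1' : ContDiffAt ℝ 1 (fderiv ℝ F) p := h1.of_le (by norm_num)
  have hR : ContDiffAt ℝ 1 (fun q => RR n (fderiv ℝ F q)) p := (RR n).contDiff.contDiffAt.comp p h1'
  have hL : ContDiffAt ℝ 1 (fun q => LL n (fderiv ℝ F q)) p := (LL n).contDiff.contDiffAt.comp p h1'
  have hy : ContDiffAt ℝ 1 (fun q : E n × E n => ((q.2, 0) : E n × E n)) p := by fun_prop
  have hB : ContDiffAt ℝ 1 (gB F) p :=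
    (h0.smul (contDiffAt_const.clm_comp (h2.clm_comp contDiffAt_const))).add (hR.smulRight hR)
  have hRR : ContDiffAt ℝ 1 (gR F) p :=
    ((h0.smul (((RR n).contDiff.contDiffAt.comp p (h2.clm_apply hy)).sub hL)).neg).sub
      ((h1'.clm_apply hy).smul hR)
  exact ((hF.gB_inv hp).contDiffAt_map_inverse.comp p hB).clm_apply hRR

lemma gZ_eq (hF : IsFinsler F) {x y : E n} (hy : y ≠ 0) :
    fderiv ℝ F (x, y) (0, gZ F (x, y)) = - fderiv ℝ F (x, y) (y, 0) ∧
    ∀ b, fderiv ℝ (fderiv ℝ F) (x, y) (0, gZ F (x, y)) (0, b) =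
      - (fderiv ℝ (fderiv ℝ F) (x, y) (y, 0) (0, b) - fderiv ℝ F (x, y) (b, 0)) := by
  have hs : ∀ b, gB F (x, y) (gZ F (x, y)) b = gR F (x, y) b := fun b => by
    rw [hF.gZ_spec (p := (x, y)) hy]
  simp only [gB_apply, gR_apply] at hs
  have hpos := (hF.pos x y hy).ne'
  have hcd := hF.cd2 (p := (x, y)) hy
  have h1 : fderiv ℝ F (x, y) (0, gZ F (x, y)) = - fderiv ℝ F (x, y) (y, 0) := by
    have h := hs y
    rw [d2_symm hcd _ (0, y), d2_symm hcd _ (0, y), hF.d2_euler hy, hF.d2_euler hy,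
      hF.euler hy, ← Prod.zero_eq_mk, map_zero] at h
    apply mul_left_cancel₀ hpos
    linarith
  refine ⟨h1, fun b => ?_⟩
  have h := hs b
  rw [h1] at h
  apply mul_left_cancel₀ hpos
  linarith

lemma exists_geodesic (hF : IsFinsler F) (x : E n) {y : E n} (hy : y ≠ 0) :
    ∃ (γ : ℝ → E n) (t₁ t₂ : ℝ), IsGeodesic F γ t₁ t₂ ∧ (0:ℝ) ∈ Set.Ioo t₁ t₂ ∧
      γ 0 = x ∧ deriv γ 0 = y := by
  have hX : ContDiffAt ℝ 1 (fun q : E n × E n => ((q.2, gZ F q) : E n × E n)) (x, y) :=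
    contDiffAt_snd.prodMk (hF.gZ_cd hy)
  obtain ⟨ε, hε, a, r, L, K, hr, hPL⟩ := IsPicardLindelof.of_contDiffAt_one hX
  obtain ⟨α, hα0, hα⟩ := (hPL 0).exists_eq_forall_mem_Icc_hasDerivWithinAt
    (Metric.mem_closedBall_self r.2)
  have hα' : ∀ t ∈ Set.Ioo (-ε) ε, HasDerivAt α ((α t).2, gZ F (α t)) t := fun t ht =>
    (hα t ⟨by linarith [ht.1], by linarith [ht.2]⟩).hasDerivAt
      (Icc_mem_nhds (by linarith [ht.1]) (by linarith [ht.2]))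
  have hcont : ContinuousAt α 0 := (hα' 0 ⟨by linarith, hε⟩).continuousAt
  have hev : ∀ᶠ t in 𝓝 (0:ℝ), (α t).2 ≠ 0 :=
    hcont.eventually ((isOpen_U n).mem_nhds (show (α 0).2 ≠ 0 by rw [hα0]; exact hy))
  obtain ⟨δ, hδ, hball⟩ := Metric.eventually_nhds_iff.1 hev
  set e := min ε δ with he
  have hepos : 0 < e := lt_min hε hδ
  have hne : ∀ t ∈ Set.Ioo (-e) e, (α t).2 ≠ 0 := fun t ht => hball (by
    rw [Real.dist_eq, sub_zero, abs_lt]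
    have := min_le_right ε δ
    constructor <;> linarith [ht.1, ht.2])
  have hd : ∀ t ∈ Set.Ioo (-e) e, HasDerivAt α ((α t).2, gZ F (α t)) t := fun t ht => hα' t (by
    have := min_le_left ε δ
    constructor <;> linarith [ht.1, ht.2])
  have hd1 : ∀ t ∈ Set.Ioo (-e) e, HasDerivAt (fun s => (α s).1) (α t).2 t := fun t ht =>
    (hasFDerivAt_fst (p := α t)).comp_hasDerivAt t (hd t ht)
  have hd2 : ∀ t ∈ Set.Ioo (-e) e, HasDerivAt (fun s => (α s).2) (gZ F (α t)) t := fun t ht =>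
    (hasFDerivAt_snd (p := α t)).comp_hasDerivAt t (hd t ht)
  have hder : Set.EqOn (deriv fun s => (α s).1) (fun s => (α s).2) (Set.Ioo (-e) e) :=
    fun t ht => (hd1 t ht).deriv
  have h0 : (0:ℝ) ∈ Set.Ioo (-e) e := ⟨by linarith, hepos⟩
  have hpair : ∀ t ∈ Set.Ioo (-e) e,
      (fun s => ((α s).1, deriv (fun s => (α s).1) s)) =ᶠ[𝓝 t] α := fun t ht => by
    filter_upwards [isOpen_Ioo.mem_nhds ht] with s hs
    rw [hder hs]
  refine ⟨fun s => (α s).1, -e, e, ⟨by linarith, ?_, ?_, ?_, ?_⟩, h0, by simp [hα0], ?_⟩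
  · rw [show (2 : WithTop ℕ∞) = 1 + 1 by norm_num, contDiffOn_succ_iff_deriv_of_isOpen isOpen_Ioo]
    refine ⟨fun t ht => (hd1 t ht).differentiableAt.differentiableWithinAt, by simp, ?_⟩
    refine ContDiffOn.congr ?_ hder
    rw [show (1 : WithTop ℕ∞) = 0 + 1 by norm_num, contDiffOn_succ_iff_deriv_of_isOpen isOpen_Ioo]
    refine ⟨fun t ht => (hd2 t ht).differentiableAt.differentiableWithinAt, by simp, ?_⟩
    rw [contDiffOn_zero]
    refine ContinuousOn.congr (f := fun t => gZ F (α t)) ?_ fun t ht => (hd2 t ht).deriv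
    intro t ht
    exact ((hF.gZ_cd (hne t ht)).continuousAt.comp (hd t ht).continuousAt).continuousWithinAt
  · intro t ht
    rw [hder ht]; exact hne t ht
  · refine ⟨F (x, y), hF.pos x y hy, fun t ht => ?_⟩
    rw [hder ht]
    have hdF : ∀ t ∈ Set.Ioo (-e) e, HasDerivAt (fun s => F (α s)) 0 t := fun t ht => by
      have h1 := (hF.hfd (hne t ht)).comp_hasDerivAt t (hd t ht)
      have h2 := (hF.gZ_eq (x := (α t).1) (hne t ht)).1
      have h3 : (((α t).2, gZ F (α t)) : E n × E n) = ((α t).2, 0) + (0, gZ F (α t)) := by simp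
      have h4 : fderiv ℝ F (α t) ((α t).2, gZ F (α t)) = 0 := by
        rw [h3, map_add]
        simp only [Prod.mk.eta] at h2
        rw [h2]; ring
      rw [h4] at h1
      exact h1
    have := isOpen_Ioo.is_const_of_deriv_eq_zero isPreconnected_Ioo
      (fun t ht => (hdF t ht).differentiableAt.differentiableWithinAt)
      (fun t ht => (hdF t ht).deriv) ht h0
    simpa [hα0] using this
  · intro i t ht
    have h1 : (fun s => pdy i F ((α s).1, deriv (fun s => (α s).1) s)) =ᶠ[𝓝 t]
        fun s => fderiv ℝ F (α s) (0, Pi.single i 1) := by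
      filter_upwards [hpair t ht] with s hs
      rw [hs]; rfl
    rw [h1.deriv_eq, (hasDerivAt_fderiv_curve (hF.cd2 (hne t ht)) (hd t ht) _).deriv, hder ht]
    have h2 := (hF.gZ_eq (x := (α t).1) (hne t ht)).2 (Pi.single i 1)
    have h3 : (((α t).2, gZ F (α t)) : E n × E n) = ((α t).2, 0) + (0, gZ F (α t)) := by simp
    simp only [Prod.mk.eta] at h2
    rw [h3, map_add, _root_.add_apply, h2]
    unfold pdx
    simp
  · rw [hder h0]; simp [hα0]

end IsFinsler

/-! ### Curves with acceleration proportional to velocity are straight -/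

lemma hasDerivAt_dot {n : ℕ} {u v : ℝ → E n} {u' v' : E n} {t : ℝ}
    (hu : HasDerivAt u u' t) (hv : HasDerivAt v v' t) :
    HasDerivAt (fun s => u s ⬝ᵥ v s) (u' ⬝ᵥ v t + u t ⬝ᵥ v') t := by
  unfold dotProduct
  rw [← Finset.sum_add_distrib]
  exact HasDerivAt.fun_sum fun i _ => (hasDerivAt_pi.1 hu i).mul (hasDerivAt_pi.1 hv i)

lemma straight_of_accel {n : ℕ} {u v : ℝ → E n} {lam : ℝ → ℝ} {t₁ t₂ : ℝ} (hlt : t₁ < t₂)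
    (hcd : ContDiffOn ℝ 2 u (Set.Ioo t₁ t₂))
    (hu : ∀ t ∈ Set.Ioo t₁ t₂, HasDerivAt u (v t) t)
    (hv : ∀ t ∈ Set.Ioo t₁ t₂, HasDerivAt v (lam t • v t) t)
    (hne : ∀ t ∈ Set.Ioo t₁ t₂, v t ≠ 0) :
    ∃ (f : ℝ → ℝ) (a b : E n), a ≠ 0 ∧
      ContDiffOn ℝ 2 f (Set.Ioo t₁ t₂) ∧
      (∀ t ∈ Set.Ioo t₁ t₂, 0 < deriv f t) ∧
      ∀ t ∈ Set.Ioo t₁ t₂, u t = f t • a + b := by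
  have hq : ∀ t ∈ Set.Ioo t₁ t₂, 0 < v t ⬝ᵥ v t := fun t ht => by
    have := Matrix.dotProduct_star_self_pos_iff.2 (hne t ht)
    simpa using this
  set N : ℝ → ℝ := fun t => Real.sqrt (v t ⬝ᵥ v t) with hN
  have hNpos : ∀ t ∈ Set.Ioo t₁ t₂, 0 < N t := fun t ht => Real.sqrt_pos.2 (hq t ht)
  have hNsq : ∀ t ∈ Set.Ioo t₁ t₂, N t * N t = v t ⬝ᵥ v t := fun t ht =>
    Real.mul_self_sqrt (hq t ht).le
  have hNd : ∀ t ∈ Set.Ioo t₁ t₂, HasDerivAt N (lam t * N t) t := fun t ht => by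
    have h := (hasDerivAt_dot (hv t ht) (hv t ht)).sqrt (hq t ht).ne'
    convert h using 1
    change _ = _ / (2 * N t)
    rw [smul_dotProduct, dotProduct_smul, smul_eq_mul, ← hNsq t ht]
    have := hNpos t ht
    field_simp
    ring
  have hconst : ∀ t ∈ Set.Ioo t₁ t₂, HasDerivAt (fun s => (N s)⁻¹ • v s) 0 t := fun t ht => by
    have h := ((hNd t ht).inv (hNpos t ht).ne').smul (hv t ht)
    rw [smul_smul, ← add_smul] at h
    have := hNpos t ht
    have h0 : (N⁻¹) t * lam t + -(lam t * N t) / N t ^ 2 = 0 := by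
      simp only [Pi.inv_apply]
      field_simp
      ring
    rw [h0, zero_smul] at h
    exact h
  obtain ⟨a, ha⟩ := isOpen_Ioo.exists_is_const_of_deriv_eq_zero isPreconnected_Ioo
      (fun t ht => (hconst t ht).differentiableAt.differentiableWithinAt)
      (fun t ht => (hconst t ht).deriv)
  have hva : ∀ t ∈ Set.Ioo t₁ t₂, v t = N t • a := fun t ht => by
    rw [← ha t ht, smul_smul, mul_inv_cancel₀ (hNpos t ht).ne', one_smul]
  obtain ⟨t0, ht0⟩ : (Set.Ioo t₁ t₂).Nonempty := Set.nonempty_Ioo.2 hlt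
  have haa : a ⬝ᵥ a = 1 := by
    have := hNpos t0 ht0
    rw [← ha t0 ht0, smul_dotProduct, dotProduct_smul, ← hNsq t0 ht0, smul_eq_mul, smul_eq_mul]
    field_simp
  have ha0 : a ≠ 0 := by
    rintro rfl
    simp at haa
  have hf : ∀ t ∈ Set.Ioo t₁ t₂, HasDerivAt (fun s => u s ⬝ᵥ a) (N t) t := fun t ht => by
    have h := hasDerivAt_dot (hu t ht) (hasDerivAt_const t a)
    rw [dotProduct_zero, add_zero, hva t ht, smul_dotProduct, haa, smul_eq_mul, mul_one] at h
    exact h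
  have hb : ∀ t ∈ Set.Ioo t₁ t₂, HasDerivAt (fun s => u s - (u s ⬝ᵥ a) • a) 0 t := fun t ht => by
    have h := (hu t ht).sub ((hf t ht).smul_const a)
    rw [hva t ht, sub_self] at h
    exact h
  obtain ⟨b, hb'⟩ := isOpen_Ioo.exists_is_const_of_deriv_eq_zero isPreconnected_Ioo
      (fun t ht => (hb t ht).differentiableAt.differentiableWithinAt)
      (fun t ht => (hb t ht).deriv)
  refine ⟨fun s => u s ⬝ᵥ a, a, b, ha0, ?_, fun t ht => ?_, fun t ht => ?_⟩
  · unfold dotProduct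
    exact ContDiffOn.sum fun i _ => (contDiffOn_pi.1 hcd i).mul contDiffOn_const
  · rw [(hf t ht).deriv]; exact hNpos t ht
  · rw [← hb' t ht]; simp

/-- The derivatives along a `C²` curve. -/
lemma c2_derivs {V : Type*} [NormedAddCommGroup V] [NormedSpace ℝ V] {γ : ℝ → V} {t₁ t₂ : ℝ}
    (h : ContDiffOn ℝ 2 γ (Set.Ioo t₁ t₂)) {t : ℝ} (ht : t ∈ Set.Ioo t₁ t₂) :
    HasDerivAt γ (deriv γ t) t ∧ HasDerivAt (deriv γ) (deriv (deriv γ) t) t := by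
  rw [show (2 : WithTop ℕ∞) = 1 + 1 by norm_num,
    contDiffOn_succ_iff_deriv_of_isOpen isOpen_Ioo] at h
  refine ⟨((h.1 t ht).differentiableAt (isOpen_Ioo.mem_nhds ht)).hasDerivAt, ?_⟩
  exact (((h.2.2.differentiableOn (by norm_num)) t ht).differentiableAt
    (isOpen_Ioo.mem_nhds ht)).hasDerivAt

/-- Euler-Lagrange equations in invariant form. -/
lemma IsGeodesic.el {n : ℕ} {F : E n × E n → ℝ} (hF : IsFinsler F) {γ : ℝ → E n} {t₁ t₂ : ℝ}
    (hγ : IsGeodesic F γ t₁ t₂) {t : ℝ} (ht : t ∈ Set.Ioo t₁ t₂) (b : E n) :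
    fderiv ℝ (fderiv ℝ F) (γ t, deriv γ t) (deriv γ t, 0) (0, b)
      - fderiv ℝ F (γ t, deriv γ t) (b, 0)
      = - fderiv ℝ (fderiv ℝ F) (γ t, deriv γ t) (0, deriv (deriv γ) t) (0, b) := by
  obtain ⟨h1, h2⟩ := c2_derivs hγ.smooth ht
  have key : (IsFinsler.RR n (fderiv ℝ (fderiv ℝ F) (γ t, deriv γ t)
      (deriv γ t, deriv (deriv γ) t))).toLinearMap
      = (IsFinsler.LL n (fderiv ℝ F (γ t, deriv γ t))).toLinearMap := by
    refine LinearMap.pi_ext' fun i => LinearMap.ext_ring ?_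
    have h3 := hγ.eulerLagrange i t ht
    have h4 := (hasDerivAt_fderiv_curve (f := F) (c := fun s => (γ s, deriv γ s))
      (hF.cd2 (hγ.vel t ht)) (h1.prodMk h2) (0, Pi.single i 1)).deriv
    unfold pdy pdx at h3
    rw [h4] at h3
    simpa [IsFinsler.RR_apply, IsFinsler.LL_apply] using h3
  have h5 := LinearMap.congr_fun key b
  simp only [ContinuousLinearMap.coe_coe, IsFinsler.RR_apply, IsFinsler.LL_apply] at h5
  have h6 : ((deriv γ t, deriv (deriv γ) t) : E n × E n)
    = (deriv γ t, 0) + (0, deriv (deriv γ) t) := by simp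
  rw [h6, map_add, _root_.add_apply] at h5
  linarith

/-- The invariant form of the PDE system. -/
def QQ {n : ℕ} (F : E n × E n → ℝ) (φ : E n → E n) : Prop :=
  ∀ (x y : E n), y ≠ 0 → ∃ w : E n, fderiv ℝ φ x w = fderiv ℝ (fderiv ℝ φ) x y y ∧
    ∀ b, fderiv ℝ (fderiv ℝ F) (x, y) (y, 0) (0, b) - fderiv ℝ F (x, y) (b, 0) =
      fderiv ℝ (fderiv ℝ F) (x, y) (0, w) (0, b)

lemma flat_of_QQ {n : ℕ} {F : E n × E n → ℝ} (hF : IsFinsler F) {φ : E n → E n}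
    (hφ : ContDiff ℝ 2 φ) (hinj : ∀ x, Function.Injective (fderiv ℝ φ x)) (hQ : QQ F φ)
    (γ : ℝ → E n) (t₁ t₂ : ℝ) (hγ : IsGeodesic F γ t₁ t₂) :
      ∃ (f : ℝ → ℝ) (a b : E n), a ≠ 0 ∧
        ContDiffOn ℝ 2 f (Set.Ioo t₁ t₂) ∧
        (∀ t ∈ Set.Ioo t₁ t₂, 0 < deriv f t) ∧
        ∀ t ∈ Set.Ioo t₁ t₂, φ (γ t) = f t • a + b := by
  have hl : ∀ t, ∃ c : ℝ, t ∈ Set.Ioo t₁ t₂ →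
      fderiv ℝ (fderiv ℝ φ) (γ t) (deriv γ t) (deriv γ t)
        + fderiv ℝ φ (γ t) (deriv (deriv γ) t) = c • fderiv ℝ φ (γ t) (deriv γ t) := by
    intro t
    by_cases ht : t ∈ Set.Ioo t₁ t₂
    swap
    · exact ⟨0, fun h => absurd h ht⟩
    obtain ⟨w, hw, hw'⟩ := hQ (γ t) (deriv γ t) (hγ.vel t ht)
    have : ∀ b, fderiv ℝ (fderiv ℝ F) (γ t, deriv γ t) (0, w + deriv (deriv γ) t) (0, b) = 0 := by
      intro b
      have h1 := hγ.el hF ht b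
      rw [hw' b] at h1
      have h2 : ((0, w + deriv (deriv γ) t) : E n × E n) = (0, w) + (0, deriv (deriv γ) t) := by
        simp
      rw [h2, map_add, _root_.add_apply]
      linarith
    obtain ⟨c, hc⟩ := hF.ker_form (hγ.vel t ht) this
    refine ⟨c, fun _ => ?_⟩
    rw [← hw, ← map_add, hc, map_smul]
  choose lam hlam using hl
  refine straight_of_accel (u := fun t => φ (γ t)) (v := fun t => fderiv ℝ φ (γ t) (deriv γ t))
    (lam := lam) hγ.lt (hφ.comp_contDiffOn hγ.smooth) ?_ ?_ ?_
  · intro t ht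
    exact ((hφ.differentiable (by norm_num)) (γ t)).hasFDerivAt.comp_hasDerivAt t
      (c2_derivs hγ.smooth ht).1
  · intro t ht
    obtain ⟨h1, h2⟩ := c2_derivs hγ.smooth ht
    rw [← hlam t ht]
    exact hasDerivAt_fderiv_curve' hφ.contDiffAt h1 h2
  · intro t ht h
    exact hγ.vel t ht (hinj _ (h.trans (map_zero _).symm))

lemma QQ_of_flat {n : ℕ} {F : E n × E n → ℝ} (hF : IsFinsler F) {φ : E n → E n}
    (hφ : ContDiff ℝ 2 φ) (hbij : ∀ x, Function.Bijective (fderiv ℝ φ x))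
    (hflat : ∀ (γ : ℝ → E n) (t₁ t₂ : ℝ), IsGeodesic F γ t₁ t₂ →
      ∃ (f : ℝ → ℝ) (a b : E n), a ≠ 0 ∧
        ContDiffOn ℝ 2 f (Set.Ioo t₁ t₂) ∧
        (∀ t ∈ Set.Ioo t₁ t₂, 0 < deriv f t) ∧
        ∀ t ∈ Set.Ioo t₁ t₂, φ (γ t) = f t • a + b) : QQ F φ := by
  intro x y hy
  obtain ⟨w, hw⟩ := (hbij x).2 (fderiv ℝ (fderiv ℝ φ) x y y)
  refine ⟨w, hw, fun b => ?_⟩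
  obtain ⟨γ, t₁, t₂, hγ, h0, hx0, hy0⟩ := hF.exists_geodesic x hy
  obtain ⟨f, a, b', ha, hf, hfpos, heq⟩ := hflat γ t₁ t₂ hγ
  have hu1 : ∀ t ∈ Set.Ioo t₁ t₂, fderiv ℝ φ (γ t) (deriv γ t) = deriv f t • a := by
    intro t ht
    have h1 := ((hφ.differentiable (by norm_num)) (γ t)).hasFDerivAt.comp_hasDerivAt t
      (c2_derivs hγ.smooth ht).1
    have h2 := ((c2_derivs hf ht).1.smul_const a).add_const b'
    refine h1.unique (h2.congr_of_eventuallyEq ?_)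
    filter_upwards [isOpen_Ioo.mem_nhds ht] with s hs using heq s hs
  have hu2 : fderiv ℝ (fderiv ℝ φ) x y y + fderiv ℝ φ x (deriv (deriv γ) 0)
      = deriv (deriv f) 0 • a := by
    obtain ⟨h1, h2⟩ := c2_derivs hγ.smooth h0
    have h3 := hasDerivAt_fderiv_curve' hφ.contDiffAt h1 h2
    have h4 := (c2_derivs hf h0).2.smul_const a
    rw [hx0, hy0] at h3
    refine h3.unique (h4.congr_of_eventuallyEq ?_)
    filter_upwards [isOpen_Ioo.mem_nhds h0] with s hs using hu1 s hs
  have hu0 := hu1 0 h0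
  have hfp := hfpos 0 h0
  rw [hx0, hy0] at hu0
  have hz : w + deriv (deriv γ) 0 = (deriv (deriv f) 0 / deriv f 0) • y := by
    apply (hbij x).1
    rw [map_add, hw, hu2, map_smul, hu0, smul_smul, div_mul_cancel₀ _ hfp.ne']
  have h5 := hγ.el hF h0 b
  rw [hx0, hy0] at h5
  rw [h5]
  have h6 : ((0, w) : E n × E n) =
      (deriv (deriv f) 0 / deriv f 0) • (0, y) - (0, deriv (deriv γ) 0) := by
    ext1
    · simp
    · simp [← hz]
  rw [h6, map_sub, map_smul, _root_.sub_apply, _root_.smul_apply, hF.d2_euler hy,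
    ← Prod.zero_eq_mk]
  simp


/-! ### The PDE in invariant form -/

lemma d2_comp_linear {n : ℕ} {F Fb : E n × E n → ℝ} {x X : E n} {A : E n →L[ℝ] E n}
    (hF : ∀ y, y ≠ 0 → ContDiffAt ℝ 2 F (x, y))
    (hFb : ∀ y, y ≠ 0 → ContDiffAt ℝ 2 Fb (X, A y))
    (h : ∀ y, Fb (X, A y) = F (x, y)) {y : E n} (hy : y ≠ 0) (a b : E n) :
    fderiv ℝ (fderiv ℝ Fb) (X, A y) (0, A a) (0, A b)
      = fderiv ℝ (fderiv ℝ F) (x, y) (0, a) (0, b) := by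
  have hline : ∀ (z : E n) (c d : E n),
      HasDerivAt (fun t : ℝ => ((z, c + t • d) : E n × E n)) (0, d) 0 := by
    intro z c d
    have hb : HasDerivAt (fun t : ℝ => c + t • d) d 0 := by
      simpa using ((hasDerivAt_id (0:ℝ)).smul_const d).const_add c
    exact (hasDerivAt_const _ _).prodMk hb
  have h1 : ∀ y, y ≠ 0 → fderiv ℝ Fb (X, A y) (0, A b) = fderiv ℝ F (x, y) (0, b) := by
    intro y hy
    have e1 := HasFDerivAt.comp_hasDerivAt_of_eq (0:ℝ)
      (((hFb y hy).differentiableAt (by norm_num)).hasFDerivAt) (hline X (A y) (A b)) (by simp)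
    have e2 := HasFDerivAt.comp_hasDerivAt_of_eq (0:ℝ)
      (((hF y hy).differentiableAt (by norm_num)).hasFDerivAt) (hline x y b) (by simp)
    refine e1.unique (e2.congr_of_eventuallyEq (Filter.Eventually.of_forall fun t => ?_))
    simp only [Function.comp_apply]
    rw [← map_smul, ← map_add, h]
  have e1 := hasDerivAt_fderiv_curve (f := Fb) (t := 0)
    (by simpa using hFb y hy) (hline X (A y) (A a)) (0, A b)
  have e2 := hasDerivAt_fderiv_curve (f := F) (t := 0)
    (by simpa using hF y hy) (hline x y a) (0, b)
  simp only [zero_smul, add_zero] at e1 e2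
  refine e1.unique (e2.congr_of_eventuallyEq ?_)
  have hc : ContinuousAt (fun t : ℝ => y + t • a) 0 := by fun_prop
  have : ∀ᶠ t in 𝓝 (0:ℝ), y + t • a ≠ 0 :=
    hc.eventually (isOpen_ne.mem_nhds (by simpa using hy))
  filter_upwards [this] with t ht
  rw [← map_smul, ← map_add, h1 _ ht]

lemma bilin_expand {n : ℕ} (T : E n × E n →L[ℝ] E n × E n →L[ℝ] ℝ) (a b : E n) :
    ∑ l, ∑ r, T (0, Pi.single r 1) (0, Pi.single l 1) * (b l * a r) = T (0, a) (0, b) := by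
  have e1 : ∀ T : E n × E n →L[ℝ] ℝ, ∀ w : E n,
      ∑ s, w s * T (0, Pi.single s 1) = T (0, w) := fun T w => by
    simpa using sum_single (T.toLinearMap ∘ₗ LinearMap.inr ℝ (E n) (E n)) w
  rw [← e1 _ b]
  refine Finset.sum_congr rfl fun l _ => ?_
  have := e1 ((ContinuousLinearMap.flip T) (0, Pi.single l 1)) a
  simp only [ContinuousLinearMap.flip_apply] at this
  rw [← this, Finset.mul_sum]
  exact Finset.sum_congr rfl fun r _ => by ring

lemma rhs_eq {n : ℕ} {Fb : E n × E n → ℝ} {φ : E n → E n} (hφ : ContDiff ℝ 2 φ) (x y : E n)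
    {q : E n × E n} (hFb : ContDiffAt ℝ 2 Fb q) (i : Fin n) :
    ∑ s, ∑ k, ∑ l, ∑ r, pdy r (pdy l Fb) q *
            (D2phi φ x s k l * Dphi φ x i r - D2phi φ x i k l * Dphi φ x s r) * (y s * y k)
    = fderiv ℝ (fderiv ℝ Fb) q (0, fderiv ℝ φ x (Pi.single i 1))
        (0, fderiv ℝ (fderiv ℝ φ) x y y)
      - fderiv ℝ (fderiv ℝ Fb) q (0, fderiv ℝ φ x y)
        (0, fderiv ℝ (fderiv ℝ φ) x (Pi.single i 1) y) := by
  set T := fderiv ℝ (fderiv ℝ Fb) q with hT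
  set A := fderiv ℝ φ x with hA
  set D := fderiv ℝ (fderiv ℝ φ) x with hD
  have hp : ∀ r l, pdy r (pdy l Fb) q = T (0, Pi.single r 1) (0, Pi.single l 1) := fun r l =>
    fderiv_fderiv_apply hFb _ _
  have hd1 : ∀ s m, Dphi φ x s m = A (Pi.single s 1) m := fun s m => rfl
  have hd2 : ∀ s k l, D2phi φ x s k l = D (Pi.single s 1) (Pi.single k 1) l := fun s k l => by
    unfold D2phi
    have h1 : DifferentiableAt ℝ (fun x' => fderiv ℝ φ x' (Pi.single k 1)) x :=
      (((hφ.contDiffAt (x := x)).fderiv_right (m := 1) (by norm_num)).differentiableAt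
        (by norm_num)).clm_apply (differentiableAt_const _)
    rw [(hasFDerivAt_pi'.1 h1.hasFDerivAt l).fderiv, hD,
      ← fderiv_fderiv_apply hφ.contDiffAt]
    rfl
  have step : ∀ s k, ∑ l, ∑ r, pdy r (pdy l Fb) q *
            (D2phi φ x s k l * Dphi φ x i r - D2phi φ x i k l * Dphi φ x s r) * (y s * y k)
      = y k * (y s * T (0, A (Pi.single i 1)) (0, D (Pi.single s 1) (Pi.single k 1)) -
        y s * T (0, A (Pi.single s 1)) (0, D (Pi.single i 1) (Pi.single k 1))) := by
    intro s k
    rw [← bilin_expand T (A (Pi.single i 1)), ← bilin_expand T (A (Pi.single s 1)), ← mul_sub,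
      ← Finset.sum_sub_distrib, Finset.mul_sum, Finset.mul_sum]
    refine Finset.sum_congr rfl fun l _ => ?_
    rw [← Finset.sum_sub_distrib, Finset.mul_sum, Finset.mul_sum]
    refine Finset.sum_congr rfl fun r _ => ?_
    rw [hp, hd1, hd1, hd2, hd2]
    ring
  simp only [step]
  let T' : E n →ₗ[ℝ] E n →ₗ[ℝ] ℝ := LinearMap.mk₂ ℝ (fun a b => T (0, a) (0, b))
    (fun a a' b => by
      rw [show ((0, a + a') : E n × E n) = (0, a) + (0, a') by simp]; simp only [map_add]; rfl)
    (fun c a b => by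
      rw [show ((0, c • a) : E n × E n) = c • (0, a) by simp]; simp only [map_smul]; rfl)
    (fun a b b' => by
      rw [show ((0, b + b') : E n × E n) = (0, b) + (0, b') by simp]; simp only [map_add])
    (fun c a b => by
      rw [show ((0, c • b) : E n × E n) = c • (0, b) by simp]; simp only [map_smul])
  have hT' : ∀ a b, T (0, a) (0, b) = T' a b := fun a b => rfl
  simp only [hT']
  have inner : ∀ s, ∑ k, y k * (y s * T' (A (Pi.single i 1)) (D (Pi.single s 1) (Pi.single k 1)) -
        y s * T' (A (Pi.single s 1)) (D (Pi.single i 1) (Pi.single k 1)))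
      = y s * T' (A (Pi.single i 1)) (D (Pi.single s 1) y) -
        y s * T' (A (Pi.single s 1)) (D (Pi.single i 1) y) := by
    intro s
    have e1 := sum_single (T' (A (Pi.single i 1)) ∘ₗ (D (Pi.single s 1)).toLinearMap) y
    have e2 := sum_single (T' (A (Pi.single s 1)) ∘ₗ (D (Pi.single i 1)).toLinearMap) y
    simp only [LinearMap.comp_apply, ContinuousLinearMap.coe_coe, smul_eq_mul] at e1 e2
    rw [← e1, ← e2, Finset.mul_sum, Finset.mul_sum, ← Finset.sum_sub_distrib]
    exact Finset.sum_congr rfl fun k _ => by ring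
  simp only [inner]
  have e1 := sum_single (T' (A (Pi.single i 1)) ∘ₗ (D.flip y).toLinearMap) y
  have e2 := sum_single ((T'.flip (D (Pi.single i 1) y)) ∘ₗ A.toLinearMap) y
  simp only [LinearMap.comp_apply, ContinuousLinearMap.coe_coe, smul_eq_mul,
    ContinuousLinearMap.flip_apply, LinearMap.flip_apply] at e1 e2
  rw [← e1, ← e2, ← Finset.sum_sub_distrib]

lemma lhs_eq {n : ℕ} {F : E n × E n → ℝ} (hF : IsFinsler F) {x y : E n} (hy : y ≠ 0)
    (i : Fin n) :
    (∑ s, pdx s (pdy i F) (x, y) * y s) - (∑ s, pdx i (pdy s F) (x, y) * y s) =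
    fderiv ℝ (fderiv ℝ F) (x, y) (y, 0) (0, Pi.single i 1)
      - fderiv ℝ F (x, y) (Pi.single i 1, 0) := by
  have hcd := hF.cd2 (p := (x, y)) hy
  have hxy : ∀ s j, pdx s (pdy j F) (x, y) =
      fderiv ℝ (fderiv ℝ F) (x, y) (Pi.single s 1, 0) (0, Pi.single j 1) := fun s j =>
    fderiv_fderiv_apply hcd _ _
  simp only [hxy]
  congr 1
  · have := sum_single (((ContinuousLinearMap.flip (fderiv ℝ (fderiv ℝ F) (x, y)))
      (0, Pi.single i 1)).toLinearMap ∘ₗ LinearMap.inl ℝ (E n) (E n)) y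
    simp only [LinearMap.comp_apply, ContinuousLinearMap.coe_coe, smul_eq_mul,
      ContinuousLinearMap.flip_apply, LinearMap.inl_apply] at this
    rw [← this]
    exact Finset.sum_congr rfl fun k _ => mul_comm _ _
  · have := sum_single ((fderiv ℝ (fderiv ℝ F) (x, y)
      (Pi.single i 1, 0)).toLinearMap ∘ₗ LinearMap.inr ℝ (E n) (E n)) y
    simp only [LinearMap.comp_apply, ContinuousLinearMap.coe_coe, smul_eq_mul,
      LinearMap.inr_apply] at this
    rw [← hF.d2_euler hy _ 0, d2_symm hcd, ← this]
    exact Finset.sum_congr rfl fun k _ => mul_comm _ _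

/-- The PDE system is equivalent to its invariant form. -/
lemma pde_iff_QQ {n : ℕ} {F Fb : E n × E n → ℝ} (hF : IsFinsler F) {φ : E n → E n}
    (hφ : ContDiff ℝ 2 φ) (hbij : ∀ x, Function.Bijective (fderiv ℝ φ x))
    (hFb : ∀ (x y : E n), Fb (φ x, fderiv ℝ φ x y) = F (x, y))
    (hFbs : ∀ (x y : E n), y ≠ 0 → ContDiffAt ℝ 2 Fb (φ x, y)) :
    (∀ (x y : E n), y ≠ 0 → ∀ i : Fin n,
        (∑ s, pdx s (pdy i F) (x, y) * y s) - (∑ s, pdx i (pdy s F) (x, y) * y s) =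
        ∑ s, ∑ k, ∑ l, ∑ r,
          pdy r (pdy l Fb) (φ x, fderiv ℝ φ x y) *
            (D2phi φ x s k l * Dphi φ x i r - D2phi φ x i k l * Dphi φ x s r) *
            (y s * y k)) ↔ QQ F φ := by
  have hne : ∀ x y : E n, y ≠ 0 → fderiv ℝ φ x y ≠ 0 := fun x y hy h =>
    hy ((hbij x).1 (h.trans (map_zero _).symm))
  have htr : ∀ x y : E n, y ≠ 0 → ∀ a b,
      fderiv ℝ (fderiv ℝ Fb) (φ x, fderiv ℝ φ x y) (0, fderiv ℝ φ x a) (0, fderiv ℝ φ x b)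
      = fderiv ℝ (fderiv ℝ F) (x, y) (0, a) (0, b) := fun x y hy a b =>
    d2_comp_linear (fun z hz => hF.cd2 hz) (fun z hz => hFbs x _ (hne x z hz)) (hFb x) hy a b
  have hrhs : ∀ x y : E n, y ≠ 0 → ∀ w, fderiv ℝ φ x w = fderiv ℝ (fderiv ℝ φ) x y y →
      ∀ i : Fin n, ∑ s, ∑ k, ∑ l, ∑ r,
          pdy r (pdy l Fb) (φ x, fderiv ℝ φ x y) *
            (D2phi φ x s k l * Dphi φ x i r - D2phi φ x i k l * Dphi φ x s r) *
            (y s * y k) = fderiv ℝ (fderiv ℝ F) (x, y) (0, w) (0, Pi.single i 1) := by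
    intro x y hy w hw i
    obtain ⟨z, hz⟩ := (hbij x).2 (fderiv ℝ (fderiv ℝ φ) x (Pi.single i 1) y)
    rw [rhs_eq hφ x y (hFbs x _ (hne x y hy)), ← hw, ← hz, htr x y hy, htr x y hy,
      hF.d2_euler hy, ← Prod.zero_eq_mk, map_zero, sub_zero, d2_symm (hF.cd2 hy)]
  constructor
  · intro h x y hy
    obtain ⟨w, hw⟩ := (hbij x).2 (fderiv ℝ (fderiv ℝ φ) x y y)
    refine ⟨w, hw, ?_⟩
    have key : (IsFinsler.RR n (fderiv ℝ (fderiv ℝ F) (x, y) (y, 0))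
        - IsFinsler.LL n (fderiv ℝ F (x, y))).toLinearMap
        = (IsFinsler.RR n (fderiv ℝ (fderiv ℝ F) (x, y) (0, w))).toLinearMap := by
      refine LinearMap.pi_ext' fun i => LinearMap.ext_ring ?_
      have h3 := h x y hy i
      rw [lhs_eq hF hy, hrhs x y hy w hw] at h3
      simpa [IsFinsler.RR_apply, IsFinsler.LL_apply] using h3
    intro b
    have := LinearMap.congr_fun key b
    simpa [IsFinsler.RR_apply, IsFinsler.LL_apply] using this
  · intro h x y hy i
    obtain ⟨w, hw, hw'⟩ := h x y hy
    rw [lhs_eq hF hy, hrhs x y hy w hw, hw']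

/-! ### Diffeomorphisms -/

lemma diffeo_bij {n : ℕ} {φ φinv : E n → E n} (hφ : ContDiff ℝ (⊤ : ℕ∞) φ)
    (ho : IsOpen (Set.range φ)) (hi : ContDiffOn ℝ (⊤ : ℕ∞) φinv (Set.range φ))
    (hl : ∀ x, φinv (φ x) = x) (x : E n) :
    Function.Bijective (fderiv ℝ φ x) ∧
      ∀ y, fderiv ℝ φinv (φ x) (fderiv ℝ φ x y) = y := by
  have h1 : HasFDerivAt φ (fderiv ℝ φ x) x :=
    (hφ.differentiable (by simp) x).hasFDerivAt
  have h2 : HasFDerivAt φinv (fderiv ℝ φinv (φ x)) (φ x) :=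
    ((hi.contDiffAt (ho.mem_nhds ⟨x, rfl⟩)).differentiableAt (by simp)).hasFDerivAt
  have h3 := h2.comp x h1
  have h4 : φinv ∘ φ = id := funext hl
  rw [h4] at h3
  have h5 := h3.unique (hasFDerivAt_id x)
  have h6 : ∀ y, fderiv ℝ φinv (φ x) (fderiv ℝ φ x y) = y := fun y =>
    DFunLike.congr_fun h5 y
  have hinj : Function.Injective (fderiv ℝ φ x) := fun a b hab => by
    rw [← h6 a, hab, h6 b]
  exact ⟨⟨hinj, (LinearMap.injective_iff_surjective (f := (fderiv ℝ φ x).toLinearMap)).1 hinj⟩, h6⟩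

lemma isOpen_dom {n : ℕ} {φ : E n → E n} (ho : IsOpen (Set.range φ)) :
    IsOpen {p : E n × E n | p.1 ∈ Set.range φ ∧ p.2 ≠ 0} :=
  (ho.preimage continuous_fst).inter (isOpen_U n)

lemma Fb_smooth {n : ℕ} {F : E n × E n → ℝ} (hF : IsFinsler F) {φ φinv : E n → E n}
    (hφ : ContDiff ℝ (⊤ : ℕ∞) φ)
    (ho : IsOpen (Set.range φ)) (hi : ContDiffOn ℝ (⊤ : ℕ∞) φinv (Set.range φ))
    (hl : ∀ x, φinv (φ x) = x) :
    ContDiffOn ℝ (⊤ : ℕ∞) (fun p : E n × E n => F (φinv p.1, fderiv ℝ φinv p.1 p.2))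
      {p : E n × E n | p.1 ∈ Set.range φ ∧ p.2 ≠ 0} := by
  have h1 : ContDiffOn ℝ (⊤ : ℕ∞) (fderiv ℝ φinv) (Set.range φ) :=
    hi.fderiv_of_isOpen ho (by simp)
  have hm : Set.MapsTo (Prod.fst : E n × E n → E n)
      {p : E n × E n | p.1 ∈ Set.range φ ∧ p.2 ≠ 0} (Set.range φ) := fun p hp => hp.1
  refine hF.smooth.comp ((hi.comp contDiffOn_fst hm).prodMk
    ((h1.comp contDiffOn_fst hm).clm_apply contDiffOn_snd)) ?_
  rintro ⟨X, Y⟩ ⟨⟨x, rfl⟩, hY⟩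
  obtain ⟨hb, h6⟩ := diffeo_bij hφ ho hi hl x
  obtain ⟨z, hz⟩ := hb.2 Y
  change fderiv ℝ φinv (φ x) Y ≠ 0
  rw [← hz, h6]
  rintro rfl
  exact hY (by simpa using hz.symm)

/-- `(ℝⁿ, F)` is projectively flat iff the second-order PDE system is
solvable by a smooth diffeomorphism `φ` onto an open subset of `ℝⁿ`. -/
theorem statement6 {n : ℕ} (F : E n × E n → ℝ) (hF : IsFinsler F) :
    ProjFlat F ↔
    (∃ φ φinv : E n → E n, ∃ Fb : E n × E n → ℝ,
      ContDiff ℝ (⊤ : ℕ∞) φ ∧ IsOpen (Set.range φ) ∧ ContDiffOn ℝ (⊤ : ℕ∞) φinv (Set.range φ) ∧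
      (∀ x : E n, φinv (φ x) = x) ∧
      (∀ (x y : E n), Fb (φ x, fderiv ℝ φ x y) = F (x, y)) ∧
      ContDiffOn ℝ (⊤ : ℕ∞) Fb {p : E n × E n | p.1 ∈ Set.range φ ∧ p.2 ≠ 0} ∧
      ∀ (x y : E n), y ≠ 0 → ∀ i : Fin n,
        (∑ s, pdx s (pdy i F) (x, y) * y s) - (∑ s, pdx i (pdy s F) (x, y) * y s) =
        ∑ s, ∑ k, ∑ l, ∑ r,
          pdy r (pdy l Fb) (φ x, fderiv ℝ φ x y) *
            (D2phi φ x s k l * Dphi φ x i r - D2phi φ x i k l * Dphi φ x s r) *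
            (y s * y k)) := by
  have h2 : (2 : WithTop ℕ∞) ≤ ((⊤ : ℕ∞) : WithTop ℕ∞) :=
    WithTop.coe_le_coe.2 (le_top (a := (2 : ℕ∞)))
  constructor
  · rintro ⟨φ, φinv, hφ, ho, hi, hl, hflat⟩
    have hb : ∀ x, Function.Bijective (fderiv ℝ φ x) := fun x => (diffeo_bij hφ ho hi hl x).1
    have hs := Fb_smooth hF hφ ho hi hl
    have hFb : ∀ (x y : E n), (fun p : E n × E n => F (φinv p.1, fderiv ℝ φinv p.1 p.2))
        (φ x, fderiv ℝ φ x y) = F (x, y) := fun x y => by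
      simp only [hl, (diffeo_bij hφ ho hi hl x).2]
    refine ⟨φ, φinv, fun p => F (φinv p.1, fderiv ℝ φinv p.1 p.2), hφ, ho, hi, hl, hFb, hs, ?_⟩
    exact (pde_iff_QQ hF (hφ.of_le h2) hb hFb fun x y hy =>
      (hs.contDiffAt ((isOpen_dom ho).mem_nhds ⟨⟨x, rfl⟩, hy⟩)).of_le h2).2
      (QQ_of_flat hF (hφ.of_le h2) hb hflat)
  · rintro ⟨φ, φinv, Fb, hφ, ho, hi, hl, hFb, hs, hpde⟩
    have hb : ∀ x, Function.Bijective (fderiv ℝ φ x) := fun x => (diffeo_bij hφ ho hi hl x).1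
    refine ⟨φ, φinv, hφ, ho, hi, hl, ?_⟩
    exact flat_of_QQ hF (hφ.of_le h2) (fun x => (hb x).1)
      ((pde_iff_QQ hF (hφ.of_le h2) hb hFb fun x y hy =>
      (hs.contDiffAt ((isOpen_dom ho).mem_nhds ⟨⟨x, rfl⟩, hy⟩)).of_le h2).1 hpde)
end
end

section
/- Let F be a Finsler function on ℝⁿ and let X : ℝⁿ → ℝⁿ be a smooth complete vector field with flow φ : ℝ × ℝⁿ → ℝⁿ (so ∂φ/∂s(s,p) = X(φ(s,p)) and φ(0,p) = p). Then the flow of X takes geodesics into geodesics as point sets — i.e. for every geodesic γ of (ℝⁿ, F) and every s ∈ ℝ the curve t ↦ φ(s, γ(t)) is a pregeodesic of (ℝⁿ, F) — if and only if there exist smooth functions C^1, …, C^n on ℝⁿ × (ℝⁿ ∖ {0}) satisfying ∑_k ∂²F/∂y^k∂y^i·C^k = ∂F/∂x^i − ∑_k ∂²F/∂x^k∂y^i·y^k for every i, such that for every index i and every (x,y) with y ≠ 0: ∑_s [ ∂²F/∂x^s∂x^i − ∑_k ∂³F/∂x^s∂x^k∂y^i·y^k − ∑_k ∂³F/∂x^s∂y^k∂y^i·C^k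 ]·X^s + ∑_{s,r} [ (∂²F/∂y^s∂x^i − ∂²F/∂y^i∂x^s)·y^r − ∂²F/∂y^s∂y^i·C^r − ( ∑_k ∂³F/∂y^s∂x^k∂y^i·y^k + ∑_k ∂³F/∂y^s∂y^k∂y^i·C^k )·y^r ]·(∂X^s/∂x^r) − ∑_{s,m,r} (∂²F/∂y^s∂y^i)·y^m·y^r·(∂²X^s/∂x^m∂x^r) = 0, where all derivatives of F and the functions C^k are evaluated at (x,y) and X and its derivatives at x. -/
open scoped BigOperators Topology
noncomputable section

/-- A pregeodesic: a `C²` curve with nowhere vanishing velocity satisfying the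
parametrization-free Euler–Lagrange equations of the length functional. -/
def IsPregeodesic {n : ℕ} (F : E n × E n → ℝ) (c : ℝ → E n) (t₁ t₂ : ℝ) : Prop :=
  t₁ < t₂ ∧ ContDiffOn ℝ 2 c (Set.Ioo t₁ t₂) ∧
  (∀ t ∈ Set.Ioo t₁ t₂, deriv c t ≠ 0) ∧
  ∀ (i : Fin n), ∀ t ∈ Set.Ioo t₁ t₂,
    pdx i F (c t, deriv c t) =
      (∑ k, pdx k (pdy i F) (c t, deriv c t) * deriv c t k) +
      (∑ k, pdy k (pdy i F) (c t, deriv c t) * deriv (fun s => deriv c s k) t)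

/-! ### Calculus preliminaries -/

section Prelim

/-- The slit tangent bundle. -/
def slit (n : ℕ) : Set (E n × E n) := {p : E n × E n | p.2 ≠ 0}

lemma isOpen_slit (n : ℕ) : IsOpen (slit n) :=
  isOpen_ne_fun continuous_snd continuous_const

variable {n : ℕ}

abbrev Sm (f : E n × E n → ℝ) : Prop := ContDiffOn ℝ (⊤ : ℕ∞) f (slit n)

lemma Sm.cda {f : E n × E n → ℝ} (hf : Sm f) {p : E n × E n} (hp : p ∈ slit n) :
    ContDiffAt ℝ (⊤ : ℕ∞) f p :=
  hf.contDiffAt ((isOpen_slit n).mem_nhds hp)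

lemma Sm.da {f : E n × E n → ℝ} (hf : Sm f) {p : E n × E n} (hp : p ∈ slit n) :
    DifferentiableAt ℝ f p :=
  (hf.cda hp).differentiableAt (by simp)

lemma Sm.dir {f : E n × E n → ℝ} (hf : Sm f) (v : E n × E n) :
    Sm (fun p => fderiv ℝ f p v) := by
  have h : ContDiffOn ℝ (⊤ : ℕ∞) (fderiv ℝ f) (slit n) :=
    hf.fderiv_of_isOpen (isOpen_slit n) (by simp)
  exact h.clm_apply contDiffOn_const

lemma Sm.pdx {f : E n × E n → ℝ} (hf : Sm f) (i : Fin n) : Sm (pdx i f) := hf.dir _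
lemma Sm.pdy {f : E n × E n → ℝ} (hf : Sm f) (i : Fin n) : Sm (pdy i f) := hf.dir _

lemma sm_y (k : Fin n) : Sm (fun p : E n × E n => p.2 k) := by
  apply ContDiff.contDiffOn
  fun_prop

lemma symm_dir {V W : Type*} [NormedAddCommGroup V] [NormedSpace ℝ V]
    [NormedAddCommGroup W] [NormedSpace ℝ W] {f : V → W} {p : V}
    (hf : ContDiffAt ℝ (⊤ : ℕ∞) f p) (u v : V) :
    fderiv ℝ (fun q => fderiv ℝ f q u) p v = fderiv ℝ (fun q => fderiv ℝ f q v) p u := by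
  have h1 : DifferentiableAt ℝ (fderiv ℝ f) p := by
    have : ContDiffAt ℝ 1 (fderiv ℝ f) p := hf.fderiv_right (by norm_cast)
    exact this.differentiableAt (by simp)
  have hs : IsSymmSndFDerivAt ℝ f p := hf.isSymmSndFDerivAt (by
    simp only [minSmoothness_of_isRCLikeNormedField]; exact ENat.LEInfty.out)
  rw [fderiv_clm_apply h1 (differentiableAt_const _), fderiv_clm_apply h1 (differentiableAt_const _)]
  simpa using hs.eq v u

lemma pdx_pdy_comm {f : E n × E n → ℝ} (hf : Sm f) {p : E n × E n} (hp : p ∈ slit n)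
    (i k : Fin n) : pdx k (pdy i f) p = pdy i (pdx k f) p := symm_dir (hf.cda hp) _ _

lemma pdy_comm {f : E n × E n → ℝ} (hf : Sm f) {p : E n × E n} (hp : p ∈ slit n)
    (i k : Fin n) : pdy k (pdy i f) p = pdy i (pdy k f) p := symm_dir (hf.cda hp) _ _

lemma pdx_comm {f : E n × E n → ℝ} (hf : Sm f) {p : E n × E n} (hp : p ∈ slit n)
    (i k : Fin n) : pdx k (pdx i f) p = pdx i (pdx k f) p := symm_dir (hf.cda hp) _ _

/-- Coordinate expansion of a linear map on `E n`. -/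
lemma clm_expand {W : Type*} [NormedAddCommGroup W] [NormedSpace ℝ W] (L : E n →L[ℝ] W) (a : E n) :
    L a = ∑ s, a s • L (Pi.single s 1) := by
  conv_lhs => rw [pi_eq_sum_univ' a]
  simp only [map_sum, map_smul]

lemma fderiv_expand (f : E n × E n → ℝ) (p : E n × E n) (a b : E n) :
    fderiv ℝ f p (a, b) = ∑ s, pdx s f p * a s + ∑ s, pdy s f p * b s := by
  have h : (a, b) = ((a, 0) : E n × E n) + (0, b) := by simp
  rw [h, map_add]
  congr 1
  · have := clm_expand ((fderiv ℝ f p).comp (ContinuousLinearMap.inl ℝ (E n) (E n))) a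
    simp only [ContinuousLinearMap.comp_apply, ContinuousLinearMap.inl_apply, smul_eq_mul] at this
    rw [this]
    exact Finset.sum_congr rfl fun s _ => mul_comm _ _
  · have := clm_expand ((fderiv ℝ f p).comp (ContinuousLinearMap.inr ℝ (E n) (E n))) b
    simp only [ContinuousLinearMap.comp_apply, ContinuousLinearMap.inr_apply, smul_eq_mul] at this
    rw [this]
    exact Finset.sum_congr rfl fun s _ => mul_comm _ _

/-- Chain rule in coordinates. -/
lemma chain {f : E n × E n → ℝ} {x y : ℝ → E n} {x' y' : E n} {s : ℝ}
    (hf : DifferentiableAt ℝ f (x s, y s)) (hx : HasDerivAt x x' s) (hy : HasDerivAt y y' s) :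
    HasDerivAt (fun σ => f (x σ, y σ))
      (∑ j, pdx j f (x s, y s) * x' j + ∑ j, pdy j f (x s, y s) * y' j) s := by
  rw [← fderiv_expand]
  exact hf.hasFDerivAt.comp_hasDerivAt s (hx.prodMk hy)

/-- Differentiating a contraction with `y`. -/
lemma contr_fderiv {f : E n × E n → ℝ} {G : Fin n → E n × E n → ℝ}
    (hG : ∀ k, Sm (G k)) (h : ∀ p ∈ slit n, ∑ k, G k p * p.2 k = f p) {p : E n × E n}
    (hp : p ∈ slit n) (v : E n × E n) :
    fderiv ℝ f p v = ∑ k, (fderiv ℝ (G k) p v * p.2 k + G k p * v.2 k) := by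
  have he : f =ᶠ[𝓝 p] fun p => ∑ k, G k p * p.2 k := by
    filter_upwards [(isOpen_slit n).mem_nhds hp] with q hq
    exact (h q hq).symm
  rw [he.fderiv_eq]
  have hd : HasFDerivAt (fun p : E n × E n => ∑ k, G k p * p.2 k)
      (∑ k, (G k p • ((ContinuousLinearMap.proj k).comp (ContinuousLinearMap.snd ℝ (E n) (E n)))
        + p.2 k • fderiv ℝ (G k) p)) p := by
    apply HasFDerivAt.fun_sum
    intro k _
    exact ((hG k).da hp).hasFDerivAt.mul
      (((ContinuousLinearMap.proj k).comp (ContinuousLinearMap.snd ℝ (E n) (E n))).hasFDerivAt)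
  rw [hd.fderiv]
  simp only [_root_.sum_apply, _root_.add_apply,
    _root_.smul_apply, smul_eq_mul, ContinuousLinearMap.comp_apply,
    ContinuousLinearMap.proj_apply, ContinuousLinearMap.coe_snd']
  exact Finset.sum_congr rfl fun k _ => by ring

lemma contr_pdx {f : E n × E n → ℝ} {G : Fin n → E n × E n → ℝ}
    (hG : ∀ k, Sm (G k)) (h : ∀ p ∈ slit n, ∑ k, G k p * p.2 k = f p) {p : E n × E n}
    (hp : p ∈ slit n) (s : Fin n) :
    ∑ k, pdx s (G k) p * p.2 k = pdx s f p := by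
  rw [pdx, contr_fderiv hG h hp]
  simp [pdx]

lemma contr_pdy {f : E n × E n → ℝ} {G : Fin n → E n × E n → ℝ}
    (hG : ∀ k, Sm (G k)) (h : ∀ p ∈ slit n, ∑ k, G k p * p.2 k = f p) {p : E n × E n}
    (hp : p ∈ slit n) (s : Fin n) :
    ∑ k, pdy s (G k) p * p.2 k = pdy s f p - G s p := by
  rw [pdy, contr_fderiv hG h hp]
  simp [pdy, Finset.sum_add_distrib, Pi.single_apply]

lemma linODE_zero {V : Type*} [NormedAddCommGroup V] [NormedSpace ℝ V] {B : ℝ → V →L[ℝ] V}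
    (hB : Continuous B) {u : ℝ → V} (hu : ∀ s, HasDerivAt u (B s (u s)) s) {s₀ : ℝ}
    (h0 : u s₀ = 0) (s : ℝ) : u s = 0 := by
  obtain ⟨a, b, ha, hb⟩ : ∃ a b, s ∈ Set.Ioo a b ∧ s₀ ∈ Set.Ioo a b := by
    use (min s s₀ - 1), (max s s₀ + 1)
    grind
  obtain ⟨K, hK⟩ := (isCompact_Icc (a := a) (b := b)).exists_bound_of_continuousOn hB.continuousOn
  have := ODE_solution_unique_of_mem_Ioo (v := fun t x => B t x) (s := fun _ => Set.univ)
    (K := Real.toNNReal K) (f := u) (g := fun _ => 0) (t₀ := s₀) (a := a) (b := b) ?_ hb ?_ ?_ (by simpa using h0)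
  · exact this ha
  · intro t ht
    apply LipschitzWith.lipschitzOnWith
    apply (B t).lipschitz.weaken
    rw [← NNReal.coe_le_coe, coe_nnnorm]
    exact (hK t (Set.Ioo_subset_Icc_self ht)).trans (Real.le_coe_toNNReal K)
  · intro t _
    exact ⟨hu t, trivial⟩
  · intro t _
    refine ⟨?_, trivial⟩
    simpa using hasDerivAt_const t (0 : V)

end Prelim

/-! ### Consequences of homogeneity -/

section Homog

variable {n : ℕ} {F : E n × E n → ℝ}

lemma IsFinsler.sm (hF : IsFinsler F) : Sm F := hF.smooth

lemma euler1 (hF : IsFinsler F) {p : E n × E n} (hp : p ∈ slit n) :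
    ∑ k, pdy k F p * p.2 k = F p := by
  obtain ⟨x, y⟩ := p
  have h1 : HasDerivAt (fun c : ℝ => F (x, c • y)) (F (x, y)) 1 := by
    have : HasDerivAt (fun c : ℝ => c * F (x, y)) (F (x, y)) 1 := by
      simpa using (hasDerivAt_id (1 : ℝ)).mul_const (F (x, y))
    apply this.congr_of_eventuallyEq
    filter_upwards [lt_mem_nhds (show (0 : ℝ) < 1 by norm_num)] with c hc
    exact hF.homog x y c hc
  have h2 := chain (f := F) (x := fun _ => x) (y := fun c : ℝ => c • y) (s := 1)
    (by simpa using hF.sm.da hp) (hasDerivAt_const _ _)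
    (by simpa using (hasDerivAt_id (1 : ℝ)).smul_const y)
  have h3 := h2.unique h1
  simpa using h3

/-- `∑ F_{y^k y^i} y^k = 0`. -/
lemma euler2 (hF : IsFinsler F) {p : E n × E n} (hp : p ∈ slit n) (i : Fin n) :
    ∑ k, pdy k (pdy i F) p * p.2 k = 0 := by
  have := contr_pdy (fun k => hF.sm.pdy k) (fun _ hp => euler1 hF hp) hp i
  rw [sub_self] at this
  rw [← this]
  exact Finset.sum_congr rfl fun k _ => by rw [pdy_comm hF.sm hp]

lemma euler3 (hF : IsFinsler F) {p : E n × E n} (hp : p ∈ slit n) (i : Fin n) :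
    ∑ k, pdx i (pdy k F) p * p.2 k = pdx i F p :=
  contr_pdx (fun k => hF.sm.pdy k) (fun _ hp => euler1 hF hp) hp i

lemma euler4 (hF : IsFinsler F) {p : E n × E n} (hp : p ∈ slit n) (i s : Fin n) :
    ∑ k, pdx s (pdy k (pdy i F)) p * p.2 k = 0 := by
  rw [contr_pdx (f := fun _ => 0) (fun k => (hF.sm.pdy i).pdy k) (fun _ hp => euler2 hF hp i) hp s]
  simp [pdx]

lemma euler5 (hF : IsFinsler F) {p : E n × E n} (hp : p ∈ slit n) (i s : Fin n) :
    ∑ k, pdy s (pdy k (pdy i F)) p * p.2 k = - pdy s (pdy i F) p := by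
  rw [contr_pdy (f := fun _ => 0) (fun k => (hF.sm.pdy i).pdy k) (fun _ hp => euler2 hF hp i) hp s]
  simp [pdy]

/-- The fundamental tensor. -/
def gm (F : E n × E n → ℝ) (p : E n × E n) : Matrix (Fin n) (Fin n) ℝ :=
  Matrix.of fun i j => F p * pdy j (pdy i F) p + pdy i F p * pdy j F p

lemma pdy_sq (hF : IsFinsler F) {p : E n × E n} (hp : p ∈ slit n) (j : Fin n) :
    pdy j (fun p => F p ^ 2) p = 2 * F p * pdy j F p := by
  have h := (hF.sm.da hp).hasFDerivAt.pow 2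
  rw [pdy, h.fderiv]
  simp [pdy]

lemma gm_eq (hF : IsFinsler F) {p : E n × E n} (hp : p ∈ slit n) :
    gm F p = Matrix.of fun i j : Fin n => (1 / 2) * pdy i (pdy j (fun p => F p ^ 2)) p := by
  ext i j
  simp only [gm, Matrix.of_apply]
  have he : pdy j (fun p => F p ^ 2) =ᶠ[𝓝 p] fun p => 2 * F p * pdy j F p := by
    filter_upwards [(isOpen_slit n).mem_nhds hp] with q hq
    exact pdy_sq hF hq j
  have h := (((hF.sm.da hp).hasFDerivAt.const_mul 2).mul ((hF.sm.pdy j).da hp).hasFDerivAt).fderiv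
  have h' : pdy i (pdy j (fun p => F p ^ 2)) p = 2 * F p * pdy i (pdy j F) p
      + pdy j F p * (2 * pdy i F p) := by
    rw [pdy, he.fderiv_eq]
    refine (congrArg (fun L => L ((0 : E n), (Pi.single i 1 : E n))) h).trans ?_
    simp [pdy]
  rw [h', pdy_comm hF.sm hp]
  ring

lemma gm_det (hF : IsFinsler F) {p : E n × E n} (hp : p ∈ slit n) : IsUnit (gm F p).det := by
  rw [gm_eq hF hp]
  exact (hF.posDef p.1 p.2 hp).det_pos.ne'.isUnit

lemma gm_sm (hF : IsFinsler F) (i j : Fin n) : Sm (fun p => gm F p i j) := by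
  simp only [gm, Matrix.of_apply]
  exact (hF.sm.mul ((hF.sm.pdy i).pdy j)).add ((hF.sm.pdy i).mul (hF.sm.pdy j))

lemma det_sm {A : E n × E n → Matrix (Fin n) (Fin n) ℝ} (hA : ∀ i j, Sm (fun p => A p i j)) :
    Sm (fun p => (A p).det) := by
  simp only [Matrix.det_apply]
  apply ContDiffOn.sum
  intro σ _
  apply ContDiffOn.const_smul
  exact contDiffOn_prod fun i _ => hA _ _

lemma gm_inv_sm (hF : IsFinsler F) (i j : Fin n) : Sm (fun p => (gm F p)⁻¹ i j) := by
  have h1 : Sm (fun p => ((gm F p).det)⁻¹ * (gm F p).adjugate i j) := by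
    apply ContDiffOn.mul
    · exact (det_sm (gm_sm hF)).inv fun p hp => (gm_det hF hp).ne_zero
    · simp only [Matrix.adjugate_apply]
      apply det_sm
      intro a b
      by_cases h : a = j
      · subst h
        simp only [Matrix.updateRow_self]
        exact contDiffOn_const
      · simp only [Matrix.updateRow_ne h]
        exact gm_sm hF a b
  apply h1.congr
  intro p hp
  simp [Matrix.inv_def, Ring.inverse_eq_inv']

/-- The right-hand side defining the geodesic spray. -/
def sprayR (F : E n × E n → ℝ) (p : E n × E n) (i : Fin n) : ℝ :=
  F p * (pdx i F p - ∑ k, pdx k (pdy i F) p * p.2 k) - pdy i F p * ∑ k, pdx k F p * p.2 k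

/-- The geodesic spray coefficients. -/
def spray (F : E n × E n → ℝ) (p : E n × E n) : E n := (gm F p)⁻¹.mulVec (sprayR F p)

lemma spray_sm (hF : IsFinsler F) (k : Fin n) : Sm (fun p => spray F p k) := by
  simp only [spray, Matrix.mulVec, dotProduct]
  apply ContDiffOn.sum
  intro j _
  refine (gm_inv_sm hF _ _).mul ?_
  simp only [sprayR]
  refine (hF.sm.mul ((hF.sm.pdx _).sub (ContDiffOn.sum fun k _ => ?_))).sub
    ((hF.sm.pdy _).mul (ContDiffOn.sum fun k _ => ?_))
  · exact ((hF.sm.pdy _).pdx _).mul (sm_y _)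
  · exact (hF.sm.pdx _).mul (sm_y _)

lemma spray_eq (hF : IsFinsler F) {p : E n × E n} (hp : p ∈ slit n) (i : Fin n) :
    F p * ∑ k, pdy k (pdy i F) p * spray F p k + pdy i F p * ∑ k, pdy k F p * spray F p k
      = sprayR F p i := by
  have h : (gm F p).mulVec (spray F p) = sprayR F p := by
    rw [spray, Matrix.mulVec_mulVec, Matrix.mul_nonsing_inv _ (gm_det hF hp), Matrix.one_mulVec]
  rw [← congrFun h i]
  simp only [Matrix.mulVec, dotProduct, gm, Matrix.of_apply, Finset.mul_sum,
    ← Finset.sum_add_distrib]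
  exact Finset.sum_congr rfl fun k _ => by ring

/-- `F` is constant along the spray. -/
lemma spray_speed (hF : IsFinsler F) {p : E n × E n} (hp : p ∈ slit n) :
    ∑ k, pdx k F p * p.2 k + ∑ k, pdy k F p * spray F p k = 0 := by
  have hpos : 0 < F p := hF.pos p.1 p.2 hp
  have h : ∑ i, (F p * ∑ k, pdy k (pdy i F) p * spray F p k
      + pdy i F p * ∑ k, pdy k F p * spray F p k) * p.2 i = ∑ i, sprayR F p i * p.2 i :=
    Finset.sum_congr rfl fun i _ => by rw [spray_eq hF hp]
  have e1 : ∑ i, (∑ k, pdy k (pdy i F) p * spray F p k) * p.2 i = 0 := by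
    simp only [Finset.sum_mul]
    rw [Finset.sum_comm]
    apply Finset.sum_eq_zero
    intro k _
    have := euler2 hF hp k
    calc _ = (∑ i, pdy i (pdy k F) p * p.2 i) * spray F p k := by
          rw [Finset.sum_mul]
          exact Finset.sum_congr rfl fun i _ => by rw [pdy_comm hF.sm hp]; ring
      _ = 0 := by rw [this, zero_mul]
  have e2 : ∑ i, (∑ k, pdx k (pdy i F) p * p.2 k) * p.2 i = ∑ k, pdx k F p * p.2 k := by
    simp only [Finset.sum_mul]
    rw [Finset.sum_comm]
    apply Finset.sum_congr rfl
    intro k _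
    rw [← euler3 hF hp k, Finset.sum_mul]
    exact Finset.sum_congr rfl fun i _ => by ring
  have e3 := euler1 hF hp
  have l : ∑ i, (F p * ∑ k, pdy k (pdy i F) p * spray F p k
      + pdy i F p * ∑ k, pdy k F p * spray F p k) * p.2 i
      = F p * ∑ i, (∑ k, pdy k (pdy i F) p * spray F p k) * p.2 i
        + (∑ k, pdy k F p * spray F p k) * ∑ i, pdy i F p * p.2 i := by
    rw [Finset.mul_sum, Finset.mul_sum, ← Finset.sum_add_distrib]
    exact Finset.sum_congr rfl fun i _ => by ring
  have r : ∑ i, sprayR F p i * p.2 i = F p * (∑ i, pdx i F p * p.2 i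
      - ∑ i, (∑ k, pdx k (pdy i F) p * p.2 k) * p.2 i)
      - (∑ k, pdx k F p * p.2 k) * ∑ i, pdy i F p * p.2 i := by
    rw [← Finset.sum_sub_distrib, Finset.mul_sum, Finset.mul_sum, ← Finset.sum_sub_distrib]
    exact Finset.sum_congr rfl fun i _ => by rw [sprayR]; ring
  rw [l, r, e1, e2, e3] at h
  have : F p * (∑ k, pdx k F p * p.2 k + ∑ k, pdy k F p * spray F p k) = 0 := by linarith
  exact (mul_eq_zero.1 this).resolve_left hpos.ne'

lemma spray_EL (hF : IsFinsler F) {p : E n × E n} (hp : p ∈ slit n) (i : Fin n) :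
    ∑ k, pdy k (pdy i F) p * spray F p k = pdx i F p - ∑ k, pdx k (pdy i F) p * p.2 k := by
  have hpos : 0 < F p := hF.pos p.1 p.2 hp
  have h1 := spray_eq hF hp i
  have h2 := spray_speed hF hp
  rw [sprayR] at h1
  have : ∑ k, pdy k F p * spray F p k = - ∑ k, pdx k F p * p.2 k := by linarith
  rw [this] at h1
  apply mul_left_cancel₀ hpos.ne'
  linarith

/-- A vector is determined, modulo `y`, by its contraction with `F_{yy}`. -/
lemma decomp (hF : IsFinsler F) {p : E n × E n} (hp : p ∈ slit n) (v : E n) :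
    ∃ c : ℝ, ∀ k, v k = F p * ∑ j, (gm F p)⁻¹ k j * (∑ m, pdy m (pdy j F) p * v m)
      + c * p.2 k := by
  have hpos : 0 < F p := hF.pos p.1 p.2 hp
  set c := (∑ m, pdy m F p * v m) / F p with hc
  refine ⟨c, fun k => ?_⟩
  have h : (gm F p).mulVec (v - c • p.2) = F p • fun j => ∑ m, pdy m (pdy j F) p * v m := by
    ext j
    have e1 := euler1 hF hp
    have e2 := euler2 hF hp j
    have : (gm F p).mulVec (v - c • p.2) j = F p * ∑ m, pdy m (pdy j F) p * v m
      + pdy j F p * ∑ m, pdy m F p * v m - c * (F p * ∑ k, pdy k (pdy j F) p * p.2 k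
      + pdy j F p * ∑ k, pdy k F p * p.2 k) := by
      simp only [Matrix.mulVec, dotProduct, gm, Matrix.of_apply, Finset.mul_sum,
        ← Finset.sum_add_distrib, ← Finset.sum_sub_distrib]
      refine Finset.sum_congr rfl fun k _ => ?_
      simp only [Pi.sub_apply, Pi.smul_apply, smul_eq_mul]
      ring
    rw [this, e1, e2, hc]
    simp only [Pi.smul_apply, smul_eq_mul]
    field_simp
    ring
  have h2 := congrArg (fun u => (gm F p)⁻¹.mulVec u k) h
  simp only [Matrix.mulVec_mulVec, Matrix.nonsing_inv_mul _ (gm_det hF hp), Matrix.one_mulVec,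
    Matrix.mulVec_smul] at h2
  simp only [Pi.sub_apply, Pi.smul_apply, smul_eq_mul, Matrix.mulVec, dotProduct] at h2
  linarith

end Homog

/-! ### The Euler–Lagrange expression and its linearization along a vector field -/

section Lin

variable {n : ℕ}

/-- The parametrization-free Euler–Lagrange expression. -/
def ELe (F : E n × E n → ℝ) (i : Fin n) (p : E n × E n) (w : E n) : ℝ :=
  pdx i F p - ∑ k, pdx k (pdy i F) p * p.2 k - ∑ k, pdy k (pdy i F) p * w k

/-- The left-hand side of the PDE, with `w` for the value of `C`. -/
def PDEe (F : E n × E n → ℝ) (X : E n → E n) (i : Fin n) (p : E n × E n) (w : E n) : ℝ :=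
  (∑ s, (pdx s (pdx i F) p
      - (∑ k, pdx s (pdx k (pdy i F)) p * p.2 k)
      - (∑ k, pdx s (pdy k (pdy i F)) p * w k)) * X p.1 s)
  + (∑ s, ∑ r,
      ((pdy s (pdx i F) p - pdy i (pdx s F) p) * p.2 r
        - pdy s (pdy i F) p * w r
        - ((∑ k, pdy s (pdx k (pdy i F)) p * p.2 k)
            + (∑ k, pdy s (pdy k (pdy i F)) p * w k)) * p.2 r) *
      fderiv ℝ X p.1 (Pi.single r 1) s)
  - (∑ s, ∑ m, ∑ r,
      pdy s (pdy i F) p * p.2 m * p.2 r *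
        fderiv ℝ (fun x' => fderiv ℝ X x' (Pi.single r 1) s) p.1 (Pi.single m 1))

/-- Coefficients of the `w`-linear part of `PDEe`. -/
def PDElin (F : E n × E n → ℝ) (X : E n → E n) (p : E n × E n) (i k : Fin n) : ℝ :=
  - (∑ s, pdx s (pdy k (pdy i F)) p * X p.1 s)
  - (∑ s, pdy s (pdy i F) p * fderiv ℝ X p.1 (Pi.single k 1) s)
  - (∑ s, ∑ r, pdy s (pdy k (pdy i F)) p * p.2 r * fderiv ℝ X p.1 (Pi.single r 1) s)

variable {F : E n × E n → ℝ} {X : E n → E n}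

lemma PDEe_sub (i : Fin n) (p : E n × E n) (w v : E n) :
    PDEe F X i p w - PDEe F X i p v = ∑ k, PDElin F X p i k * (w k - v k) := by
  have h1 : ∑ k, PDElin F X p i k * (w k - v k)
      = - (∑ s, (∑ k, pdx s (pdy k (pdy i F)) p * (w k - v k)) * X p.1 s)
        - (∑ s, ∑ r, pdy s (pdy i F) p * (w r - v r) * fderiv ℝ X p.1 (Pi.single r 1) s)
        - (∑ s, ∑ r, (∑ k, pdy s (pdy k (pdy i F)) p * (w k - v k)) * p.2 r
            * fderiv ℝ X p.1 (Pi.single r 1) s) := by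
    simp only [PDElin, sub_mul, Finset.sum_sub_distrib, neg_mul, Finset.sum_neg_distrib]
    congr 1
    · congr 1
      · congr 1
        simp only [Finset.sum_mul]
        rw [Finset.sum_comm]
        exact Finset.sum_congr rfl fun s _ => Finset.sum_congr rfl fun k _ => by ring
      · simp only [Finset.sum_mul]
        rw [Finset.sum_comm]
        exact Finset.sum_congr rfl fun s _ => Finset.sum_congr rfl fun k _ => by ring
    · simp only [Finset.sum_mul]
      rw [Finset.sum_comm]
      refine Finset.sum_congr rfl fun s _ => ?_
      rw [Finset.sum_comm]
      refine Finset.sum_congr rfl fun r _ => Finset.sum_congr rfl fun k _ => by ring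
  rw [h1]
  simp only [PDEe, mul_sub, Finset.sum_sub_distrib]
  simp only [sub_mul, add_mul, Finset.sum_sub_distrib, Finset.sum_add_distrib]
  ring

lemma PDElin_y (hF : IsFinsler F) {p : E n × E n} (hp : p ∈ slit n) (i : Fin n) :
    ∑ k, PDElin F X p i k * p.2 k = 0 := by
  have h1 : ∑ k, PDElin F X p i k * p.2 k
      = - (∑ s, (∑ k, pdx s (pdy k (pdy i F)) p * p.2 k) * X p.1 s)
        - (∑ s, ∑ r, pdy s (pdy i F) p * p.2 r * fderiv ℝ X p.1 (Pi.single r 1) s)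
        - (∑ s, ∑ r, (∑ k, pdy s (pdy k (pdy i F)) p * p.2 k) * p.2 r
            * fderiv ℝ X p.1 (Pi.single r 1) s) := by
    simp only [PDElin, sub_mul, Finset.sum_sub_distrib, neg_mul, Finset.sum_neg_distrib]
    congr 1
    · congr 1
      · congr 1
        simp only [Finset.sum_mul]
        rw [Finset.sum_comm]
        exact Finset.sum_congr rfl fun s _ => Finset.sum_congr rfl fun k _ => by ring
      · simp only [Finset.sum_mul]
        rw [Finset.sum_comm]
        exact Finset.sum_congr rfl fun s _ => Finset.sum_congr rfl fun k _ => by ring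
    · simp only [Finset.sum_mul]
      rw [Finset.sum_comm]
      refine Finset.sum_congr rfl fun s _ => ?_
      rw [Finset.sum_comm]
      refine Finset.sum_congr rfl fun r _ => Finset.sum_congr rfl fun k _ => by ring
  rw [h1]
  simp only [euler4 hF hp, euler5 hF hp]
  simp

lemma clm_coord (L : E n →L[ℝ] E n) (y : E n) (s : Fin n) :
    L y s = ∑ r, L (Pi.single r 1) s * y r := by
  rw [clm_expand L y]
  simp [Finset.sum_apply, mul_comm]

/-- Coordinates of the first and second prolongations. -/
lemma prolong1 (x y : E n) (s : Fin n) :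
    fderiv ℝ X x y s = ∑ r, fderiv ℝ X x (Pi.single r 1) s * y r := by
  exact clm_coord _ _ _

lemma prolong2 (hX : ContDiff ℝ (⊤ : ℕ∞) X) (x y : E n) (s : Fin n) :
    fderiv ℝ (fderiv ℝ X) x y y s = ∑ m, ∑ r, y m * y r *
      fderiv ℝ (fun x' => fderiv ℝ X x' (Pi.single r 1) s) x (Pi.single m 1) := by
  have hd : DifferentiableAt ℝ (fderiv ℝ X) x := by
    have : ContDiff ℝ (⊤ : ℕ∞) (fderiv ℝ X) := hX.fderiv_right (by simp)
    exact this.contDiffAt.differentiableAt (by simp)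
  have h : ∀ r m : Fin n, fderiv ℝ (fun x' => fderiv ℝ X x' (Pi.single r 1) s) x (Pi.single m 1)
      = fderiv ℝ (fderiv ℝ X) x (Pi.single m 1) (Pi.single r 1) s := by
    intro r m
    have h1 : HasFDerivAt (fun x' => fderiv ℝ X x' (Pi.single r 1))
        ((ContinuousLinearMap.apply ℝ (E n) (Pi.single r 1 : E n)).comp
          (fderiv ℝ (fderiv ℝ X) x)) x :=
      (ContinuousLinearMap.apply ℝ (E n) (Pi.single r 1 : E n)).hasFDerivAt.comp x hd.hasFDerivAt
    have h2 := (hasFDerivAt_pi'.1 h1) s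
    rw [h2.fderiv]
    simp
  simp only [h]
  rw [clm_expand (fderiv ℝ (fderiv ℝ X) x) y]
  simp only [sum_apply, smul_apply, Finset.sum_apply, Pi.smul_apply, smul_eq_mul]
  refine Finset.sum_congr rfl fun m _ => ?_
  rw [clm_coord (fderiv ℝ (fderiv ℝ X) x (Pi.single m 1)) y s, Finset.mul_sum]
  exact Finset.sum_congr rfl fun r _ => by ring

lemma lin_alg (a b q h X y w : Fin n → ℝ) (c d e f J : Fin n → Fin n → ℝ)
    (H : Fin n → Fin n → Fin n → ℝ) :
    (∑ j, a j * X j + ∑ j, b j * ∑ r, J j r * y r)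
      - ∑ k, ((∑ j, c j k * X j + ∑ j, d j k * ∑ r, J j r * y r) * y k
          + q k * ∑ r, J k r * y r)
      - ∑ k, ((∑ j, e j k * X j + ∑ j, f j k * ∑ r, J j r * y r) * w k
          + h k * ((∑ m, ∑ r, y m * y r * H k m r) + ∑ r, J k r * w r))
    = (∑ s, (a s - (∑ k, c s k * y k) - (∑ k, e s k * w k)) * X s)
      + (∑ s, ∑ r, ((b s - q s) * y r - h s * w r
          - ((∑ k, d s k * y k) + (∑ k, f s k * w k)) * y r) * J s r)
      - (∑ s, ∑ m, ∑ r, h s * y m * y r * H s m r) := by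
  have sw : ∀ (u : Fin n → Fin n → ℝ) (A B : Fin n → ℝ),
      ∑ k, (∑ j, u j k * A j) * B k = ∑ s, (∑ k, u s k * B k) * A s := by
    intro u A B
    simp only [Finset.sum_mul]
    rw [Finset.sum_comm]
    exact Finset.sum_congr rfl fun s _ => Finset.sum_congr rfl fun k _ => by ring
  have e1 : ∀ s, ∑ r, ((b s - q s) * y r - h s * w r
          - ((∑ k, d s k * y k) + (∑ k, f s k * w k)) * y r) * J s r
      = (b s - q s - (∑ k, d s k * y k) - (∑ k, f s k * w k)) * (∑ r, J s r * y r)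
        - h s * ∑ r, J s r * w r := by
    intro s
    rw [Finset.mul_sum, Finset.mul_sum, ← Finset.sum_sub_distrib]
    exact Finset.sum_congr rfl fun r _ => by ring
  have e2 : ∀ s, ∑ m, ∑ r, h s * y m * y r * H s m r
      = h s * ∑ m, ∑ r, y m * y r * H s m r := by
    intro s
    simp only [Finset.mul_sum]
    exact Finset.sum_congr rfl fun m _ => Finset.sum_congr rfl fun r _ => by ring
  simp only [e1, e2]
  simp only [add_mul, sub_mul, mul_add, Finset.sum_add_distrib, Finset.sum_sub_distrib]
  have s1 := sw d (fun j => ∑ r, J j r * y r) y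
  have s2 := sw f (fun j => ∑ r, J j r * y r) w
  beta_reduce at s1 s2
  rw [sw c X y, sw e X w, s1, s2]
  ring

/-- Derivative of the Euler–Lagrange expression along a curve which is an integral curve of the
second prolongation of `X`. -/
lemma ELe_hasDerivAt (hF : IsFinsler F) (hX : ContDiff ℝ (⊤ : ℕ∞) X) (i : Fin n)
    {x y w : ℝ → E n} {s : ℝ} (hp : (x s, y s) ∈ slit n)
    (hx : HasDerivAt x (X (x s)) s)
    (hy : HasDerivAt y (fderiv ℝ X (x s) (y s)) s)
    (hw : HasDerivAt w (fderiv ℝ (fderiv ℝ X) (x s) (y s) (y s) + fderiv ℝ X (x s) (w s)) s) :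
    HasDerivAt (fun σ => ELe F i (x σ, y σ) (w σ)) (PDEe F X i (x s, y s) (w s)) s := by
  have hyk := hasDerivAt_pi.1 hy
  have hwk := hasDerivAt_pi.1 hw
  have h := ((chain ((hF.sm.pdx i).da hp) hx hy).sub
    (HasDerivAt.fun_sum (u := Finset.univ) fun k _ =>
      (chain (((hF.sm.pdy i).pdx k).da hp) hx hy).mul (hyk k))).sub
    (HasDerivAt.fun_sum (u := Finset.univ) fun k _ =>
      (chain (((hF.sm.pdy i).pdy k).da hp) hx hy).mul (hwk k))
  refine h.congr_deriv ?_
  simp only [PDEe, Pi.add_apply, prolong2 hX, prolong1 (X := X) (x s) (y s),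
    prolong1 (X := X) (x s) (w s)]
  simp only [pdx_pdy_comm hF.sm hp i]
  exact lin_alg _ _ _ _ _ _ _ _ _ _ _ _ _

end Lin

/-! ### Variational equations of a flow -/

section Flow

variable {V : Type*} [NormedAddCommGroup V] [NormedSpace ℝ V]

lemma hda_fst {W : Type*} [NormedAddCommGroup W] [NormedSpace ℝ W] {f : ℝ → V × W} {f' : V × W}
    {t : ℝ} (h : HasDerivAt f f' t) : HasDerivAt (fun t => (f t).1) f'.1 t :=
  (ContinuousLinearMap.fst ℝ V W).hasFDerivAt.comp_hasDerivAt t h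

lemma hda_snd {W : Type*} [NormedAddCommGroup W] [NormedSpace ℝ W] {f : ℝ → V × W} {f' : V × W}
    {t : ℝ} (h : HasDerivAt f f' t) : HasDerivAt (fun t => (f t).2) f'.2 t :=
  (ContinuousLinearMap.snd ℝ V W).hasFDerivAt.comp_hasDerivAt t h

lemma flow_fderiv {X : V → V} {φ : ℝ × V → V} (hφ : ContDiff ℝ (⊤ : ℕ∞) φ)
    (hflow : ∀ s p, HasDerivAt (fun s' => φ (s', p)) (X (φ (s, p))) s) (q : ℝ × V) :
    fderiv ℝ φ q (1, 0) = X (φ q) := by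
  obtain ⟨s, p⟩ := q
  have h1 : HasDerivAt (fun s' => φ (s', p)) (fderiv ℝ φ (s, p) (1, 0)) s :=
    ((hφ.differentiable (by simp)) (s, p)).hasFDerivAt.comp_hasDerivAt s
      ((hasDerivAt_id s).prodMk (hasDerivAt_const s p))
  exact h1.unique (hflow s p)

lemma flow_var {X : V → V} (hX : ContDiff ℝ (⊤ : ℕ∞) X) {φ : ℝ × V → V}
    (hφ : ContDiff ℝ (⊤ : ℕ∞) φ)
    (hflow : ∀ s p, HasDerivAt (fun s' => φ (s', p)) (X (φ (s, p))) s) (s : ℝ) (p v : V) :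
    HasDerivAt (fun s' => fderiv ℝ φ (s', p) (0, v))
      (fderiv ℝ X (φ (s, p)) (fderiv ℝ φ (s, p) (0, v))) s := by
  have hd : DifferentiableAt ℝ (fun q => fderiv ℝ φ q (0, v)) (s, p) := by
    have : ContDiff ℝ (⊤ : ℕ∞) (fderiv ℝ φ) := hφ.fderiv_right (by simp)
    exact ((this.clm_apply contDiff_const).differentiable (by simp)) _
  have h1 : HasDerivAt (fun s' => fderiv ℝ φ (s', p) (0, v))
      (fderiv ℝ (fun q => fderiv ℝ φ q (0, v)) (s, p) (1, 0)) s :=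
    hd.hasFDerivAt.comp_hasDerivAt (f := fun s' => (s', p)) s ((hasDerivAt_id s).prodMk (hasDerivAt_const s p))
  rw [symm_dir hφ.contDiffAt] at h1
  have h2 : (fun q => fderiv ℝ φ q (1, 0)) = fun q => X (φ q) :=
    funext fun q => flow_fderiv hφ hflow q
  rw [h2] at h1
  have h3 : HasFDerivAt (fun q => X (φ q)) ((fderiv ℝ X (φ (s, p))).comp (fderiv ℝ φ (s, p)))
      (s, p) :=
    ((hX.differentiable (by simp)) _).hasFDerivAt.comp (s, p)
      ((hφ.differentiable (by simp)) _).hasFDerivAt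
  rw [h3.fderiv] at h1
  exact h1

lemma flow_zero {φ : ℝ × V → V} (hφ : ContDiff ℝ (⊤ : ℕ∞) φ) (h0 : ∀ p, φ (0, p) = p) (p v : V) :
    fderiv ℝ φ (0, p) (0, v) = v := by
  have h1 : HasFDerivAt (fun q => φ (0, q))
      ((fderiv ℝ φ (0, p)).comp (ContinuousLinearMap.inr ℝ ℝ V)) p :=
    ((hφ.differentiable (by simp)) (0, p)).hasFDerivAt.comp p (hasFDerivAt_prodMk_right 0 p)
  simp only [h0] at h1
  have := h1.unique (hasFDerivAt_id p)
  simpa using congrArg (fun L => L v) this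

/-- The tangent lift of a flow. -/
def tflow (φ : ℝ × V → V) (q : ℝ × (V × V)) : V × V :=
  (φ (q.1, q.2.1), fderiv ℝ φ (q.1, q.2.1) (0, q.2.2))

/-- The tangent lift of a vector field. -/
def tfield (X : V → V) (q : V × V) : V × V := (X q.1, fderiv ℝ X q.1 q.2)

lemma tflow_smooth {φ : ℝ × V → V} (hφ : ContDiff ℝ (⊤ : ℕ∞) φ) :
    ContDiff ℝ (⊤ : ℕ∞) (tflow φ) := by
  have h : ContDiff ℝ (⊤ : ℕ∞) (fderiv ℝ φ) := hφ.fderiv_right (by simp)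
  have hp : ContDiff ℝ (⊤ : ℕ∞) (fun q : ℝ × (V × V) => (q.1, q.2.1)) := by fun_prop
  refine (hφ.comp hp).prodMk ((h.comp hp).clm_apply ?_)
  fun_prop

lemma tfield_smooth {X : V → V} (hX : ContDiff ℝ (⊤ : ℕ∞) X) :
    ContDiff ℝ (⊤ : ℕ∞) (tfield X) := by
  have h : ContDiff ℝ (⊤ : ℕ∞) (fderiv ℝ X) := hX.fderiv_right (by simp)
  exact (hX.comp contDiff_fst).prodMk ((h.comp contDiff_fst).clm_apply contDiff_snd)

lemma tflow_flow {X : V → V} (hX : ContDiff ℝ (⊤ : ℕ∞) X) {φ : ℝ × V → V}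
    (hφ : ContDiff ℝ (⊤ : ℕ∞) φ)
    (hflow : ∀ s p, HasDerivAt (fun s' => φ (s', p)) (X (φ (s, p))) s) (s : ℝ) (p : V × V) :
    HasDerivAt (fun s' => tflow φ (s', p)) (tfield X (tflow φ (s, p))) s :=
  (hflow s p.1).prodMk (flow_var hX hφ hflow s p.1 p.2)

lemma tfield_fderiv_snd {X : V → V} (hX : ContDiff ℝ (⊤ : ℕ∞) X) (x y a b : V) :
    (fderiv ℝ (tfield X) (x, y) (a, b)).2
      = fderiv ℝ (fderiv ℝ X) x a y + fderiv ℝ X x b := by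
  have h : ContDiff ℝ (⊤ : ℕ∞) (fderiv ℝ X) := hX.fderiv_right (by simp)
  have h1 : HasFDerivAt (fun q : V × V => fderiv ℝ X q.1)
      ((fderiv ℝ (fderiv ℝ X) x).comp (ContinuousLinearMap.fst ℝ V V)) (x, y) :=
    ((h.differentiable (by simp)) x).hasFDerivAt.comp (x, y) hasFDerivAt_fst
  have h2 := h1.clm_apply (hasFDerivAt_snd (𝕜 := ℝ) (p := (x, y)))
  have h3 : HasFDerivAt (fun q : V × V => X q.1)
      ((fderiv ℝ X x).comp (ContinuousLinearMap.fst ℝ V V)) (x, y) :=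
    ((hX.differentiable (by simp)) x).hasFDerivAt.comp (x, y) hasFDerivAt_fst
  have h4 : fderiv ℝ (tfield X) (x, y) = _ := (h3.prodMk h2).fderiv
  rw [h4]
  simp [add_comm]

lemma tflow_fderiv_fst {φ : ℝ × V → V} (hφ : ContDiff ℝ (⊤ : ℕ∞) φ) (s : ℝ) (p v a b : V) :
    (fderiv ℝ (tflow φ) (s, (p, v)) (0, (a, b))).1 = fderiv ℝ φ (s, p) (0, a) := by
  have h1 := (((tflow_smooth hφ).differentiable (by simp)) (s, (p, v))).hasFDerivAt.fst
  have hp : HasFDerivAt (fun q : ℝ × (V × V) => (q.1, q.2.1))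
      ((ContinuousLinearMap.fst ℝ ℝ (V × V)).prod
        ((ContinuousLinearMap.fst ℝ V V).comp (ContinuousLinearMap.snd ℝ ℝ (V × V))))
      (s, (p, v)) :=
    ContinuousLinearMap.hasFDerivAt ((ContinuousLinearMap.fst ℝ ℝ (V × V)).prod
        ((ContinuousLinearMap.fst ℝ V V).comp (ContinuousLinearMap.snd ℝ ℝ (V × V))))
  have h2 := (((hφ.differentiable (by simp)) (s, p)).hasFDerivAt).comp (s, (p, v)) hp
  have := h1.unique h2
  simpa using congrArg (fun L => L (0, (a, b))) this

/-- Second-order part of the lifted flow. -/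
def accel (φ : ℝ × V → V) (s : ℝ) (p v a : V) : V :=
  (fderiv ℝ (tflow φ) (s, (p, v)) (0, (v, a))).2

lemma accel_deriv {X : V → V} (hX : ContDiff ℝ (⊤ : ℕ∞) X) {φ : ℝ × V → V}
    (hφ : ContDiff ℝ (⊤ : ℕ∞) φ)
    (hflow : ∀ s p, HasDerivAt (fun s' => φ (s', p)) (X (φ (s, p))) s) (s : ℝ) (p v a : V) :
    HasDerivAt (fun s' => accel φ s' p v a)
      (fderiv ℝ (fderiv ℝ X) (φ (s, p)) (fderiv ℝ φ (s, p) (0, v)) (fderiv ℝ φ (s, p) (0, v))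
        + fderiv ℝ X (φ (s, p)) (accel φ s p v a)) s := by
  have h := hda_snd (flow_var (tfield_smooth hX) (tflow_smooth hφ) (tflow_flow hX hφ hflow) s
    (p, v) (v, a))
  have e : fderiv ℝ (tflow φ) (s, (p, v)) (0, (v, a))
      = (fderiv ℝ φ (s, p) (0, v), accel φ s p v a) :=
    Prod.ext (tflow_fderiv_fst hφ s p v v a) rfl
  rw [e] at h
  have e2 := tfield_fderiv_snd hX (φ (s, p)) (fderiv ℝ φ (s, p) (0, v))
    (fderiv ℝ φ (s, p) (0, v)) (accel φ s p v a)
  exact h.congr_deriv e2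

lemma accel_zero {φ : ℝ × V → V}
    (hφ : ContDiff ℝ (⊤ : ℕ∞) φ) (h0 : ∀ p, φ (0, p) = p) (p v a : V) :
    accel φ 0 p v a = a := by
  have : ∀ q, tflow φ (0, q) = q := fun q => Prod.ext (h0 _) (flow_zero hφ h0 _ _)
  rw [accel, flow_zero (tflow_smooth hφ) this]

lemma curve_vel {φ : ℝ × V → V} (hφ : ContDiff ℝ (⊤ : ℕ∞) φ) {γ : ℝ → V} {γ' : V} {t : ℝ}
    (h : HasDerivAt γ γ' t) (s : ℝ) :
    HasDerivAt (fun t => φ (s, γ t)) (fderiv ℝ φ (s, γ t) (0, γ')) t :=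
  ((hφ.differentiable (by simp)) (s, γ t)).hasFDerivAt.comp_hasDerivAt t
    ((hasDerivAt_const t s).prodMk h)

lemma c2_deriv {γ : ℝ → V} {t₁ t₂ t : ℝ} (h : ContDiffOn ℝ 2 γ (Set.Ioo t₁ t₂))
    (ht : t ∈ Set.Ioo t₁ t₂) :
    HasDerivAt γ (deriv γ t) t ∧ HasDerivAt (deriv γ) (deriv (deriv γ) t) t := by
  have h2 : ContDiffOn ℝ (1 + 1) γ (Set.Ioo t₁ t₂) := h
  have h' := (contDiffOn_succ_iff_deriv_of_isOpen isOpen_Ioo).1 h2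
  have hn : Set.Ioo t₁ t₂ ∈ 𝓝 t := isOpen_Ioo.mem_nhds ht
  exact ⟨(h'.1.differentiableAt hn).hasDerivAt,
    ((h'.2.2.differentiableOn (by simp)).differentiableAt hn).hasDerivAt⟩

lemma curve_accel {φ : ℝ × V → V} (hφ : ContDiff ℝ (⊤ : ℕ∞) φ) {γ : ℝ → V} {t₁ t₂ t : ℝ}
    (h : ContDiffOn ℝ 2 γ (Set.Ioo t₁ t₂)) (ht : t ∈ Set.Ioo t₁ t₂) (s : ℝ) :
    HasDerivAt (deriv fun t => φ (s, γ t))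
      (accel φ s (γ t) (deriv γ t) (deriv (deriv γ) t)) t := by
  have h1 := c2_deriv h ht
  have h2 := hda_snd (curve_vel (tflow_smooth hφ) (h1.1.prodMk h1.2) s)
  apply h2.congr_of_eventuallyEq
  filter_upwards [isOpen_Ioo.mem_nhds ht] with τ hτ
  exact (curve_vel hφ (c2_deriv h hτ).1 s).deriv

end Flow

/-! ### Geodesics -/

section Geod

variable {n : ℕ} {F : E n × E n → ℝ}

lemma geod_EL (hF : IsFinsler F) {γ : ℝ → E n} {t₁ t₂ t : ℝ} (h : IsGeodesic F γ t₁ t₂)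
    (ht : t ∈ Set.Ioo t₁ t₂) (i : Fin n) :
    ELe F i (γ t, deriv γ t) (deriv (deriv γ) t) = 0 := by
  have h1 := c2_deriv h.smooth ht
  have h2 := chain ((hF.sm.pdy i).da (p := (γ t, deriv γ t)) (h.vel t ht)) h1.1 h1.2
  have h3 := h.eulerLagrange i t ht
  rw [h2.deriv] at h3
  rw [ELe, ← h3]
  ring

lemma exists_geod (hF : IsFinsler F) (x y : E n) (hy : y ≠ 0) :
    ∃ (γ : ℝ → E n) (ε : ℝ), 0 < ε ∧ IsGeodesic F γ (-ε) ε ∧ γ 0 = x ∧ deriv γ 0 = y ∧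
      deriv (deriv γ) 0 = spray F (x, y) := by
  have hp : (x, y) ∈ slit n := hy
  have hsp : ContDiffOn ℝ (⊤ : ℕ∞) (spray F) (slit n) := contDiffOn_pi.2 (spray_sm hF)
  have hv : ContDiffAt ℝ 1 (fun p : E n × E n => (p.2, spray F p)) (x, y) :=
    contDiffAt_snd.prodMk
      ((hsp.contDiffAt ((isOpen_slit n).mem_nhds hp)).of_le (by exact_mod_cast le_top))
  obtain ⟨α, hα0, ε, hε, hα⟩ :=
    hv.exists_forall_mem_closedBall_exists_eq_forall_mem_Ioo_hasDerivAt₀ 0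
  simp only [zero_sub, zero_add] at hα
  have hc : ContinuousAt α 0 := (hα 0 ⟨by linarith, hε⟩).continuousAt
  have hn : α ⁻¹' slit n ∈ 𝓝 (0 : ℝ) :=
    hc.preimage_mem_nhds (by rw [hα0]; exact (isOpen_slit n).mem_nhds hp)
  obtain ⟨δ, hδ, hδs⟩ := Metric.mem_nhds_iff.1 hn
  set η := min ε δ with hη
  have hη0 : 0 < η := lt_min hε hδ
  have hA : ∀ t ∈ Set.Ioo (-η) η, HasDerivAt α ((α t).2, spray F (α t)) t := fun t ht =>
    hα t ⟨by linarith [ht.1, min_le_left ε δ], by linarith [ht.2, min_le_left ε δ]⟩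
  have hS : ∀ t ∈ Set.Ioo (-η) η, α t ∈ slit n := fun t ht => hδs (by
    rw [Metric.mem_ball, Real.dist_eq, sub_zero, abs_lt]
    exact ⟨by linarith [ht.1, min_le_right ε δ], by linarith [ht.2, min_le_right ε δ]⟩)
  have d1 : ∀ t ∈ Set.Ioo (-η) η, HasDerivAt (fun t => (α t).1) (α t).2 t :=
    fun t ht => hda_fst (hA t ht)
  have d2 : ∀ t ∈ Set.Ioo (-η) η, HasDerivAt (fun t => (α t).2) (spray F (α t)) t :=
    fun t ht => hda_snd (hA t ht)
  have d3 : ∀ t ∈ Set.Ioo (-η) η, deriv (fun t => (α t).1) t = (α t).2 :=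
    fun t ht => (d1 t ht).deriv
  have d4 : ∀ t ∈ Set.Ioo (-η) η, HasDerivAt (deriv (fun t => (α t).1)) (spray F (α t)) t :=
    fun t ht => (d2 t ht).congr_of_eventuallyEq (by
      filter_upwards [isOpen_Ioo.mem_nhds ht] with τ hτ
      exact d3 τ hτ)
  have h0 : (0 : ℝ) ∈ Set.Ioo (-η) η := ⟨by linarith, hη0⟩
  have hcα : ContinuousOn α (Set.Ioo (-η) η) := fun t ht => (hA t ht).continuousAt.continuousWithinAt
  have heq : ∀ t, t ∈ Set.Ioo (-η) η → ((α t).1, deriv (fun t => (α t).1) t) = α t :=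
    fun t ht => Prod.ext rfl (d3 t ht)
  refine ⟨fun t => (α t).1, η, hη0, ⟨by linarith, ?_, ?_, ?_, ?_⟩, ?_, ?_, ?_⟩
  · rw [show (2 : WithTop ℕ∞) = 1 + 1 by norm_num, contDiffOn_succ_iff_deriv_of_isOpen isOpen_Ioo]
    refine ⟨fun t ht => (d1 t ht).differentiableAt.differentiableWithinAt, by simp, ?_⟩
    rw [show (1 : WithTop ℕ∞) = 0 + 1 by norm_num, contDiffOn_succ_iff_deriv_of_isOpen isOpen_Ioo]
    refine ⟨fun t ht => (d4 t ht).differentiableAt.differentiableWithinAt, by simp, ?_⟩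
    rw [contDiffOn_zero]
    exact (hsp.continuousOn.comp hcα hS).congr fun t ht => (d4 t ht).deriv
  · intro t ht
    rw [d3 t ht]
    exact hS t ht
  · refine ⟨F (x, y), hF.pos x y hy, fun t ht => ?_⟩
    have hder : ∀ t ∈ Set.Ioo (-η) η, HasDerivAt (fun t => F (α t)) 0 t := by
      intro t ht
      have := chain (f := F) (x := fun t => (α t).1) (y := fun t => (α t).2)
        (hF.sm.da (hS t ht)) (d1 t ht) (d2 t ht)
      exact this.congr_deriv (spray_speed hF (hS t ht))
    rw [heq t ht, ← hα0]
    exact isOpen_Ioo.is_const_of_deriv_eq_zero (isPreconnected_Ioo)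
      (fun t ht => (hder t ht).differentiableAt.differentiableWithinAt)
      (fun t ht => (hder t ht).deriv) ht h0
  · intro i t ht
    have := chain (f := pdy i F) (x := fun t => (α t).1) (y := deriv (fun t => (α t).1))
      (s := t) (by rw [heq t ht]; exact (hF.sm.pdy i).da (hS t ht)) (d1 t ht) (d4 t ht)
    rw [this.deriv]
    simp only [heq t ht]
    rw [spray_EL hF (hS t ht)]
    ring
  · simp [hα0]
  · rw [d3 0 h0, hα0]
  · rw [(d4 0 h0).deriv, hα0]

end Geod

/-! ### Propagation along the flow -/

section Propagation

variable {n : ℕ} {F : E n × E n → ℝ} {X : E n → E n}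

lemma PDElin_cont (hF : IsFinsler F) (hX : ContDiff ℝ (⊤ : ℕ∞) X) (i k : Fin n) :
    ContinuousOn (fun p => PDElin F X p i k) (slit n) := by
  have hX0 : ∀ s, ContinuousOn (fun p : E n × E n => X p.1 s) (slit n) := fun s =>
    (((continuous_apply s).comp hX.continuous).comp continuous_fst).continuousOn
  have hfd : Continuous (fderiv ℝ X) := hX.continuous_fderiv (by simp)
  have hX1 : ∀ r s, ContinuousOn (fun p : E n × E n => fderiv ℝ X p.1 (Pi.single r 1) s)
      (slit n) := fun r s =>
    ((continuous_apply s).comp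
      ((hfd.comp continuous_fst).clm_apply continuous_const)).continuousOn
  unfold PDElin
  refine ((ContinuousOn.neg ?_).sub ?_).sub ?_
  · exact continuousOn_finsetSum _ fun s _ =>
      (((hF.sm.pdy i).pdy k).pdx s).continuousOn.mul (hX0 s)
  · exact continuousOn_finsetSum _ fun s _ =>
      ((hF.sm.pdy i).pdy s).continuousOn.mul (hX1 k s)
  · exact continuousOn_finsetSum _ fun s _ => continuousOn_finsetSum _ fun r _ =>
      ((((hF.sm.pdy i).pdy k).pdy s).continuousOn.mul (sm_y r).continuousOn).mul (hX1 r s)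

/-- Matrix of the linear ODE satisfied by the Euler–Lagrange expression along the flow. -/
def propM (F : E n × E n → ℝ) (X : E n → E n) (p : E n × E n) (i j : Fin n) : ℝ :=
  - (F p * ∑ k, PDElin F X p i k * (gm F p)⁻¹ k j)

lemma propM_cont (hF : IsFinsler F) (hX : ContDiff ℝ (⊤ : ℕ∞) X) (i j : Fin n) :
    ContinuousOn (fun p => propM F X p i j) (slit n) := by
  unfold propM
  exact (hF.sm.continuousOn.mul (continuousOn_finsetSum _ fun k _ =>
    (PDElin_cont hF hX i k).mul (gm_inv_sm hF k j).continuousOn)).neg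

lemma PDEe_eq (hF : IsFinsler F) {p : E n × E n} (hp : p ∈ slit n) {C : E n}
    (hC : ∀ i, ∑ k, pdy k (pdy i F) p * C k = pdx i F p - ∑ k, pdx k (pdy i F) p * p.2 k)
    (hPDE : ∀ i, PDEe F X i p C = 0) (w : E n) (i : Fin n) :
    PDEe F X i p w = ∑ j, propM F X p i j * ELe F j p w := by
  have h1 := PDEe_sub (F := F) (X := X) i p w C
  rw [hPDE, sub_zero] at h1
  obtain ⟨c, hc⟩ := decomp hF hp (w - C)
  have h2 : ∀ j, ∑ m, pdy m (pdy j F) p * (w - C) m = - ELe F j p w := by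
    intro j
    rw [ELe, ← hC j]
    simp only [Pi.sub_apply, mul_sub, Finset.sum_sub_distrib]
    ring
  simp only [h2] at hc
  have h3 : ∀ k, PDElin F X p i k * (w k - C k)
      = (∑ j, - (F p * (PDElin F X p i k * (gm F p)⁻¹ k j)) * ELe F j p w)
        + c * (PDElin F X p i k * p.2 k) := by
    intro k
    have := hc k
    rw [Pi.sub_apply] at this
    rw [this, mul_add, Finset.mul_sum, Finset.mul_sum]
    congr 1
    · exact Finset.sum_congr rfl fun j _ => by ring
    · ring
  rw [h1, Finset.sum_congr rfl fun k _ => h3 k, Finset.sum_add_distrib, ← Finset.mul_sum,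
    PDElin_y hF hp, mul_zero, add_zero, Finset.sum_comm]
  refine Finset.sum_congr rfl fun j _ => ?_
  rw [propM, ← Finset.sum_mul, Finset.mul_sum, Finset.sum_neg_distrib]

lemma linODE_coord {B : ℝ → Fin n → Fin n → ℝ} (hB : ∀ i j, Continuous fun s => B s i j)
    {u : ℝ → E n} (hu : ∀ s i, HasDerivAt (fun σ => u σ i) (∑ j, B s i j * u s j) s)
    (h0 : u 0 = 0) (s : ℝ) : u s = 0 := by
  let L : ℝ → E n →L[ℝ] E n := fun s => ∑ i, ∑ j, B s i j •
    ((ContinuousLinearMap.single ℝ (fun _ : Fin n => ℝ) i).comp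
      (ContinuousLinearMap.proj (R := ℝ) (φ := fun _ : Fin n => ℝ) j))
  have hL : Continuous L := continuous_finsetSum _ fun i _ => continuous_finsetSum _ fun j _ =>
    (hB i j).smul continuous_const
  refine linODE_zero hL (fun s => hasDerivAt_pi.2 fun i => (hu s i).congr_deriv ?_) h0 s
  simp [L, sum_apply, Finset.sum_apply, Pi.single_apply]

end Propagation

/-- the flow of a smooth complete vector field `X` takes geodesics into
geodesics as point sets iff the components of `X` satisfy the second-order Killing-type
PDE system. -/
theorem statement8 {n : ℕ} (F : E n × E n → ℝ) (hF : IsFinsler F)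
    (X : E n → E n) (hX : ContDiff ℝ (⊤ : ℕ∞) X)
    (φ : ℝ × E n → E n) (hφsmooth : ContDiff ℝ (⊤ : ℕ∞) φ)
    (hφ0 : ∀ p : E n, φ (0, p) = p)
    (hflow : ∀ (s : ℝ) (p : E n),
      HasDerivAt (fun s' => φ (s', p)) (X (φ (s, p))) s) :
    (∀ (γ : ℝ → E n) (t₁ t₂ : ℝ), IsGeodesic F γ t₁ t₂ →
        ∀ s : ℝ, IsPregeodesic F (fun t => φ (s, γ t)) t₁ t₂) ↔
    (∃ C : Fin n → (E n × E n → ℝ),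
      (∀ k : Fin n, ContDiffOn ℝ (⊤ : ℕ∞) (C k) {p : E n × E n | p.2 ≠ 0}) ∧
      (∀ (x y : E n), y ≠ 0 → ∀ i : Fin n,
        ∑ k, pdy k (pdy i F) (x, y) * C k (x, y) =
          pdx i F (x, y) - ∑ k, pdx k (pdy i F) (x, y) * y k) ∧
      ∀ (x y : E n), y ≠ 0 → ∀ i : Fin n,
        (∑ s, (pdx s (pdx i F) (x, y)
            - (∑ k, pdx s (pdx k (pdy i F)) (x, y) * y k)
            - (∑ k, pdx s (pdy k (pdy i F)) (x, y) * C k (x, y))) * X x s)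
        + (∑ s, ∑ r,
            ((pdy s (pdx i F) (x, y) - pdy i (pdx s F) (x, y)) * y r
              - pdy s (pdy i F) (x, y) * C r (x, y)
              - ((∑ k, pdy s (pdx k (pdy i F)) (x, y) * y k)
                  + (∑ k, pdy s (pdy k (pdy i F)) (x, y) * C k (x, y))) * y r) *
            fderiv ℝ X x (Pi.single r 1) s)
        - (∑ s, ∑ m, ∑ r,
            pdy s (pdy i F) (x, y) * y m * y r *
              fderiv ℝ (fun x' => fderiv ℝ X x' (Pi.single r 1) s) x (Pi.single m 1))
        = 0) := by
  constructor
  · intro H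
    refine ⟨fun k p => spray F p k, spray_sm hF, fun x y hy i => spray_EL hF (p := (x, y)) hy i, ?_⟩
    intro x y hy i
    obtain ⟨γ, ε, hε, hγ, hγ0, hγ1, hγ2⟩ := exists_geod hF x y hy
    have h0 : (0 : ℝ) ∈ Set.Ioo (-ε) ε := ⟨by linarith, hε⟩
    have hd := c2_deriv hγ.smooth h0
    have hz : ∀ s, ELe F i (φ (s, x), fderiv ℝ φ (s, x) (0, y))
        (accel φ s x y (spray F (x, y))) = 0 := by
      intro s
      have h1 := (H γ _ _ hγ s).2.2.2 i 0 h0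
      have h2 := (curve_vel hφsmooth hd.1 s).deriv
      have h3 := curve_accel hφsmooth hγ.smooth h0 s
      have h4 : ∀ k, deriv (fun τ => deriv (fun t => φ (s, γ t)) τ k) 0 = _ :=
        fun k => (hasDerivAt_pi.1 h3 k).deriv
      simp only [h4] at h1
      simp only [h2] at h1
      rw [hγ2, hγ1, hγ0] at h1
      rw [ELe, h1]
      ring
    have hP := ELe_hasDerivAt hF hX i (x := fun s => φ (s, x))
      (y := fun s => fderiv ℝ φ (s, x) (0, y)) (w := fun s => accel φ s x y (spray F (x, y)))
      (s := 0) (by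
        show fderiv ℝ φ (0, x) (0, y) ≠ 0
        rw [flow_zero hφsmooth hφ0]; exact hy)
      (hflow 0 x) (flow_var hX hφsmooth hflow 0 x y) (accel_deriv hX hφsmooth hflow 0 x y _)
    simp only [hz] at hP
    have h5 := hP.unique (hasDerivAt_const (0 : ℝ) (0 : ℝ))
    rw [accel_zero hφsmooth hφ0, flow_zero hφsmooth hφ0, hφ0] at h5
    exact h5
  · rintro ⟨C, -, hC, hPDE⟩ γ t₁ t₂ hγ s
    have hy0 : ∀ t ∈ Set.Ioo t₁ t₂, ∀ σ, fderiv ℝ φ (σ, γ t) (0, deriv γ t) ≠ 0 := by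
      intro t ht σ h
      have hB : Continuous fun σ => fderiv ℝ X (φ (σ, γ t)) :=
        (hX.continuous_fderiv (by simp)).comp
          (hφsmooth.continuous.comp (continuous_id.prodMk continuous_const))
      have := linODE_zero hB (u := fun σ => fderiv ℝ φ (σ, γ t) (0, deriv γ t))
        (fun σ => flow_var hX hφsmooth hflow σ (γ t) (deriv γ t)) h 0
      rw [flow_zero hφsmooth hφ0] at this
      exact hγ.vel t ht this
    refine ⟨hγ.lt, ?_, ?_, ?_⟩
    · exact (hφsmooth.of_le ENat.LEInfty.out).comp_contDiffOn
        (contDiffOn_const.prodMk hγ.smooth)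
    · intro t ht
      rw [(curve_vel hφsmooth (c2_deriv hγ.smooth ht).1 s).deriv]
      exact hy0 t ht s
    · intro i t ht
      have hd := c2_deriv hγ.smooth ht
      have h2 := (curve_vel hφsmooth hd.1 s).deriv
      have h3 := curve_accel hφsmooth hγ.smooth ht s
      have h4 : ∀ k, deriv (fun τ => deriv (fun t => φ (s, γ t)) τ k) t = _ :=
        fun k => (hasDerivAt_pi.1 h3 k).deriv
      simp only [h4]
      simp only [h2]
      set u : ℝ → E n := fun σ j => ELe F j (φ (σ, γ t), fderiv ℝ φ (σ, γ t) (0, deriv γ t))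
        (accel φ σ (γ t) (deriv γ t) (deriv (deriv γ) t)) with hu
      have hcurve : Continuous fun σ => (φ (σ, γ t), fderiv ℝ φ (σ, γ t) (0, deriv γ t)) := by
        have hc : Continuous fun σ : ℝ => (σ, γ t) := continuous_id.prodMk continuous_const
        exact (hφsmooth.continuous.comp hc).prodMk
          (((hφsmooth.continuous_fderiv (by simp)).comp hc).clm_apply continuous_const)
      have hmem : ∀ σ, (φ (σ, γ t), fderiv ℝ φ (σ, γ t) (0, deriv γ t)) ∈ slit n :=
        fun σ => hy0 t ht σ
      have hzero : u s = 0 := by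
        refine linODE_coord
          (B := fun σ => propM F X (φ (σ, γ t), fderiv ℝ φ (σ, γ t) (0, deriv γ t)))
          (fun i j => (propM_cont hF hX i j).comp_continuous hcurve hmem) ?_ ?_ s
        · intro σ j
          have hP := ELe_hasDerivAt hF hX j (x := fun s => φ (s, γ t))
            (y := fun s => fderiv ℝ φ (s, γ t) (0, deriv γ t))
            (w := fun s => accel φ s (γ t) (deriv γ t) (deriv (deriv γ) t))
            (s := σ) (hmem σ) (hflow σ _) (flow_var hX hφsmooth hflow σ _ _)
            (accel_deriv hX hφsmooth hflow σ _ _ _)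
          refine hP.congr_deriv ?_
          exact PDEe_eq hF (hmem σ) (C := fun k => C k _)
            (fun i => hC _ _ (hmem σ) i) (fun i => hPDE _ _ (hmem σ) i) _ j
        · funext j
          simp only [hu, hφ0, flow_zero hφsmooth hφ0, accel_zero hφsmooth hφ0]
          exact geod_EL hF hγ ht j
      have := congrFun hzero i
      simp only [hu, ELe, Pi.zero_apply] at this
      linarith
end
end

section
/- Let F be a Finsler function on ℝⁿ. Then (ℝⁿ, F) is projectively flat in a parameter-preserving manner in the standard coordinates if and only if for every x ∈ ℝⁿ, every y ≠ 0 and every index i: ∑_k ∂²(F²)/∂x^k∂y^i(x,y)·y^k = ½·∑_k ∂²(F²)/∂x^i∂y^k(x,y)·y^k. -/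
open scoped BigOperators Topology
noncomputable section

/-- `(ℝⁿ, F)` is projectively flat in a parameter-preserving manner in the standard
coordinates: every geodesic has the form `t ↦ t • a + b`. -/
def ParamFlat {n : ℕ} (F : E n × E n → ℝ) : Prop :=
  ∀ (γ : ℝ → E n) (t₁ t₂ : ℝ), IsGeodesic F γ t₁ t₂ →
    ∃ a b : E n, a ≠ 0 ∧ ∀ t ∈ Set.Ioo t₁ t₂, γ t = t • a + b

namespace Fins

variable {n : ℕ}

/-- The slit tangent bundle. -/
def U (n : ℕ) : Set (E n × E n) := {p | p.2 ≠ 0}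

lemma isOpen_U : IsOpen (U n) := isOpen_ne_fun continuous_snd continuous_const

lemma smoothAt {F : E n × E n → ℝ} (hF : IsFinsler F) {p : E n × E n} (hp : p ∈ U n) :
    ContDiffAt ℝ (⊤ : ℕ∞) F p := hF.smooth.contDiffAt (isOpen_U.mem_nhds hp)

lemma smoothSq {F : E n × E n → ℝ} (hF : IsFinsler F) {p : E n × E n} (hp : p ∈ U n) :
    ContDiffAt ℝ (⊤ : ℕ∞) (fun p => F p ^ 2) p := (smoothAt hF hp).pow 2

lemma smooth_D {L : E n × E n → ℝ} {p : E n × E n} (hL : ContDiffAt ℝ (⊤ : ℕ∞) L p) :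
    ContDiffAt ℝ (⊤ : ℕ∞) (fderiv ℝ L) p := by
  apply hL.fderiv_right
  exact le_of_eq (by rfl)

lemma smooth_D2 {L : E n × E n → ℝ} {p : E n × E n} (hL : ContDiffAt ℝ (⊤ : ℕ∞) L p) :
    ContDiffAt ℝ (⊤ : ℕ∞) (fderiv ℝ (fderiv ℝ L)) p := by
  apply (smooth_D hL).fderiv_right
  exact le_of_eq (by rfl)

lemma diff_D {L : E n × E n → ℝ} {p : E n × E n} (hL : ContDiffAt ℝ (⊤ : ℕ∞) L p) :
    DifferentiableAt ℝ (fderiv ℝ L) p := (smooth_D hL).differentiableAt (by simp)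

lemma fderiv_apply {L : E n × E n → ℝ} {p : E n × E n} (hL : ContDiffAt ℝ (⊤ : ℕ∞) L p)
    (v w : E n × E n) :
    fderiv ℝ (fun q => fderiv ℝ L q v) p w = fderiv ℝ (fderiv ℝ L) p w v := by
  have h := (diff_D hL).hasFDerivAt.clm_apply (hasFDerivAt_const v p)
  rw [h.fderiv]; simp

lemma symm2 {L : E n × E n → ℝ} {p : E n × E n} (hL : ContDiffAt ℝ (⊤ : ℕ∞) L p)
    (v w : E n × E n) :
    fderiv ℝ (fderiv ℝ L) p w v = fderiv ℝ (fderiv ℝ L) p v w := by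
  have := hL.isSymmSndFDerivAt (by
    simp only [minSmoothness_of_isRCLikeNormedField]
    exact WithTop.coe_le_coe.2 (le_top : (2 : ℕ∞) ≤ ⊤))
  exact this.eq w v

lemma sum_inl (f : E n × E n →L[ℝ] ℝ) (y : E n) :
    ∑ k, f (Pi.single k 1, 0) * y k = f (y, 0) := by
  have h : (f.comp (ContinuousLinearMap.inl ℝ (E n) (E n))) y =
      ∑ k, f (Pi.single k 1, 0) * y k := by
    conv_lhs => rw [pi_eq_sum_univ' y]
    rw [map_sum]
    refine Finset.sum_congr rfl fun k _ => ?_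
    simp [mul_comm]
  rw [← h]; simp

lemma sum_inr (f : E n × E n →L[ℝ] ℝ) (y : E n) :
    ∑ k, f (0, Pi.single k 1) * y k = f (0, y) := by
  have := sum_inl (f.comp (ContinuousLinearEquiv.prodComm ℝ (E n) (E n)).toContinuousLinearMap) y
  simpa using this

/-- Euler for `L`. -/
lemma euler0 {F : E n × E n → ℝ} (hF : IsFinsler F) {p : E n × E n} (hp : p ∈ U n) :
    fderiv ℝ (fun p => F p ^ 2) p (0, p.2) = 2 * F p ^ 2 := by
  obtain ⟨x, y⟩ := p
  have hl : HasDerivAt (fun c : ℝ => ((x, c • y) : E n × E n)) (0, y) 1 := by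
    have := (hasDerivAt_const (1:ℝ) x).prodMk ((hasDerivAt_id (1:ℝ)).smul_const y)
    simpa using this
  have hd : HasFDerivAt (fun p => F p ^ 2) (fderiv ℝ (fun p => F p ^ 2) (x, y))
      ((x, (1:ℝ) • y) : E n × E n) := by
    rw [one_smul]; exact ((smoothSq hF hp).differentiableAt (by simp)).hasFDerivAt
  have h1 := hd.comp_hasDerivAt (1:ℝ) hl
  have h2 : HasDerivAt (fun c : ℝ => c ^ 2 * F (x, y) ^ 2) (2 * F (x, y) ^ 2) 1 := by
    have := (hasDerivAt_pow 2 (1:ℝ)).mul_const (F (x, y) ^ 2)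
    simpa using this
  refine h1.unique (h2.congr_of_eventuallyEq ?_)
  filter_upwards [lt_mem_nhds (zero_lt_one (α := ℝ))] with c hc
  simp [hF.homog x y c hc, mul_pow]

lemma fderiv_homog {F : E n × E n → ℝ} (hF : IsFinsler F) {x y : E n} (hp : y ≠ 0) (u : E n)
    {c : ℝ} (hc : 0 < c) :
    fderiv ℝ (fun p => F p ^ 2) (x, c • y) (u, 0) =
      c ^ 2 * fderiv ℝ (fun p => F p ^ 2) (x, y) (u, 0) := by
  have key : ∀ z : E n, z ≠ 0 → HasDerivAt (fun s : ℝ => F (x + s • u, z) ^ 2)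
      (fderiv ℝ (fun p => F p ^ 2) (x, z) (u, 0)) 0 := by
    intro z hz
    have hl : HasDerivAt (fun s : ℝ => ((x + s • u, z) : E n × E n)) (u, 0) 0 := by
      have := (((hasDerivAt_id (0:ℝ)).smul_const u).const_add x).prodMk
        (hasDerivAt_const (0:ℝ) z)
      simpa using this
    have hd : HasFDerivAt (fun p => F p ^ 2) (fderiv ℝ (fun p => F p ^ 2) (x, z))
        ((x + (0:ℝ) • u, z) : E n × E n) := by
      rw [zero_smul, add_zero]
      exact ((smoothSq hF (p := (x, z)) hz).differentiableAt (by simp)).hasFDerivAt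
    exact hd.comp_hasDerivAt (0:ℝ) hl
  have h1 := key (c • y) (smul_ne_zero hc.ne' hp)
  have h2 := (key y hp).const_mul (c ^ 2)
  refine h1.unique ?_
  refine h2.congr_of_eventuallyEq (Filter.Eventually.of_forall fun s => ?_)
  simp only [hF.homog _ _ c hc, mul_pow]

/-- Euler for the `x`-derivatives of `L`. -/
lemma euler1 {F : E n × E n → ℝ} (hF : IsFinsler F) {x y : E n} (hp : y ≠ 0) (u : E n) :
    fderiv ℝ (fderiv ℝ (fun p => F p ^ 2)) (x, y) (0, y) (u, 0) =
      2 * fderiv ℝ (fun p => F p ^ 2) (x, y) (u, 0) := by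
  have hl : HasDerivAt (fun c : ℝ => ((x, c • y) : E n × E n)) (0, y) 1 := by
    have := (hasDerivAt_const (1:ℝ) x).prodMk ((hasDerivAt_id (1:ℝ)).smul_const y)
    simpa using this
  have hd : HasFDerivAt (fderiv ℝ (fun p => F p ^ 2))
      (fderiv ℝ (fderiv ℝ (fun p => F p ^ 2)) (x, y)) ((x, (1:ℝ) • y) : E n × E n) := by
    rw [one_smul]; exact (diff_D (smoothSq hF (p := (x, y)) hp)).hasFDerivAt
  have h0 : HasDerivAt (fun c : ℝ => fderiv ℝ (fun p => F p ^ 2) (x, c • y))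
      (fderiv ℝ (fderiv ℝ (fun p => F p ^ 2)) (x, y) (0, y)) 1 := hd.comp_hasDerivAt (1:ℝ) hl
  have h1 : HasDerivAt (fun c : ℝ => fderiv ℝ (fun p => F p ^ 2) (x, c • y) (u, 0))
      (fderiv ℝ (fderiv ℝ (fun p => F p ^ 2)) (x, y) (0, y) (u, 0)) 1 := by
    simpa using h0.clm_apply (hasDerivAt_const (1:ℝ) ((u, 0) : E n × E n))
  have h2 : HasDerivAt (fun c : ℝ => c ^ 2 * fderiv ℝ (fun p => F p ^ 2) (x, y) (u, 0))
      (2 * fderiv ℝ (fun p => F p ^ 2) (x, y) (u, 0)) 1 := by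
    have := (hasDerivAt_pow 2 (1:ℝ)).mul_const (fderiv ℝ (fun p => F p ^ 2) (x, y) (u, 0))
    simpa using this
  refine h1.unique (h2.congr_of_eventuallyEq ?_)
  filter_upwards [lt_mem_nhds (zero_lt_one (α := ℝ))] with c hc
  exact fderiv_homog hF hp u hc

/-- Coordinate-free form of the condition. -/
lemma cond_iff {F : E n × E n → ℝ} (hF : IsFinsler F) {x y : E n} (hp : y ≠ 0) (i : Fin n) :
    (∑ k, pdx k (pdy i (fun p => F p ^ 2)) (x, y) * y k =
        (1 / 2) * ∑ k, pdx i (pdy k (fun p => F p ^ 2)) (x, y) * y k) ↔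
    fderiv ℝ (fderiv ℝ (fun p => F p ^ 2)) (x, y) (y, 0) (0, Pi.single i 1) =
      fderiv ℝ (fun p => F p ^ 2) (x, y) (Pi.single i 1, 0) := by
  have hs := smoothSq hF (p := (x, y)) hp
  have h1 : ∀ k i, pdx k (pdy i (fun p => F p ^ 2)) (x, y) =
      fderiv ℝ (fderiv ℝ (fun p => F p ^ 2)) (x, y) (Pi.single k 1, 0) (0, Pi.single i 1) := by
    intro k i
    exact fderiv_apply hs _ _
  simp only [h1]
  have h2 := sum_inr (fderiv ℝ (fderiv ℝ (fun p => F p ^ 2)) (x, y) (Pi.single i 1, 0)) y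
  have h3 := sum_inl ((fderiv ℝ (fderiv ℝ (fun p => F p ^ 2)) (x, y)).flip (0, Pi.single i 1)) y
  simp only [ContinuousLinearMap.flip_apply] at h3
  rw [h2, h3, symm2 hs (0, y), euler1 hF hp]
  simp

lemma nondeg {F : E n × E n → ℝ} (hF : IsFinsler F) {p : E n × E n} (hp : p ∈ U n) (w : E n)
    (h : ∀ i, fderiv ℝ (fderiv ℝ (fun p => F p ^ 2)) p (0, w) (0, Pi.single i 1) = 0) :
    w = 0 := by
  by_contra hw
  have hs := smoothSq hF hp
  have hpd := hF.posDef p.1 p.2 hp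
  have h1 : ∀ k i, pdy k (pdy i (fun p => F p ^ 2)) (p.1, p.2) =
      fderiv ℝ (fderiv ℝ (fun p => F p ^ 2)) p (0, Pi.single k 1) (0, Pi.single i 1) := by
    intro k i
    exact fderiv_apply hs _ _
  simp only [h1] at hpd
  have h2 := hpd.dotProduct_mulVec_pos hw
  have h3 : ∀ i, ∑ k, fderiv ℝ (fderiv ℝ (fun p => F p ^ 2)) p (0, Pi.single i 1)
      (0, Pi.single k 1) * w k = 0 := by
    intro i
    rw [sum_inr, symm2 hs (0, w), h i]
  have h4 : (Matrix.of fun i j : Fin n => (1 / 2) * fderiv ℝ (fderiv ℝ (fun p => F p ^ 2)) p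
      (0, Pi.single i 1) (0, Pi.single j 1)).mulVec w = 0 := by
    ext i
    simp only [Matrix.mulVec, dotProduct, Matrix.of_apply, mul_assoc, ← Finset.mul_sum]
    rw [h3]; simp
  rw [h4] at h2
  simp at h2

lemma curve_deriv {F : E n × E n → ℝ} (hF : IsFinsler F) {α : ℝ → E n × E n} {t : ℝ}
    (hp : α t ∈ U n) {v : E n × E n} (hα : HasDerivAt α v t) (u : E n × E n) :
    HasDerivAt (fun s => fderiv ℝ (fun p => F p ^ 2) (α s) u)
      (fderiv ℝ (fderiv ℝ (fun p => F p ^ 2)) (α t) v u) t := by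
  have := ((diff_D (smoothSq hF hp)).hasFDerivAt.comp_hasDerivAt t hα).clm_apply
    (hasDerivAt_const t u)
  simpa using this

lemma fderiv_sq {F : E n × E n → ℝ} (hF : IsFinsler F) {p : E n × E n}
    (hp : p ∈ U n) (u : E n × E n) :
    fderiv ℝ F p u = (2 * F p)⁻¹ * fderiv ℝ (fun p => F p ^ 2) p u := by
  have h := ((smoothAt hF hp).differentiableAt (by simp)).hasFDerivAt.pow 2
  have hpos := hF.pos p.1 p.2 hp
  rw [h.fderiv]
  simp
  field_simp

/-- Euler-Lagrange for `F` versus `F²` along constant speed curves. -/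
lemma el_deriv {F : E n × E n → ℝ} (hF : IsFinsler F) {α : ℝ → E n × E n} {t : ℝ} {c : ℝ}
    (hU : ∀ᶠ s in 𝓝 t, α s ∈ U n ∧ F (α s) = c) {v : E n × E n} (hα : HasDerivAt α v t)
    (i : Fin n) :
    deriv (fun s => pdy i F (α s)) t =
      (2 * c)⁻¹ * fderiv ℝ (fderiv ℝ (fun p => F p ^ 2)) (α t) v (0, Pi.single i 1) := by
  have h1 := (curve_deriv hF hU.self_of_nhds.1 hα (0, Pi.single i 1)).const_mul (2 * c)⁻¹
  refine (h1.congr_of_eventuallyEq ?_).deriv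
  filter_upwards [hU] with s hs
  rw [pdy, fderiv_sq hF hs.1, hs.2]

/-- reading off fibre coordinates of a covector -/
def C (n : ℕ) : (E n × E n →L[ℝ] ℝ) →L[ℝ] E n :=
  ContinuousLinearMap.pi fun i => ContinuousLinearMap.apply ℝ ℝ ((0, Pi.single i 1) : E n × E n)

/-- reading off base coordinates of a covector -/
def Cbase (n : ℕ) : (E n × E n →L[ℝ] ℝ) →L[ℝ] E n :=
  ContinuousLinearMap.pi fun i => ContinuousLinearMap.apply ℝ ℝ ((Pi.single i 1, 0) : E n × E n)

/-- fibre Hessian as an endomorphism -/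
def A (L : E n × E n → ℝ) (p : E n × E n) : E n →L[ℝ] E n :=
  (C n).comp ((fderiv ℝ (fderiv ℝ L) p).comp (ContinuousLinearMap.inr ℝ (E n) (E n)))

/-- right-hand side -/
def b (L : E n × E n → ℝ) (p : E n × E n) : E n :=
  Cbase n (fderiv ℝ L p) - C n (fderiv ℝ (fderiv ℝ L) p (ContinuousLinearMap.inl ℝ (E n) (E n) p.2))

/-- geodesic spray -/
def V (L : E n × E n → ℝ) (p : E n × E n) : E n × E n :=
  (p.2, (A L p).inverse (b L p))

lemma A_equiv {F : E n × E n → ℝ} (hF : IsFinsler F) {p : E n × E n} (hp : p ∈ U n) :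
    ∃ e : E n ≃L[ℝ] E n, (e : E n →L[ℝ] E n) = A (fun p => F p ^ 2) p := by
  have hinj : Function.Injective (A (fun p => F p ^ 2) p : E n →ₗ[ℝ] E n) := by
    rw [← LinearMap.ker_eq_bot, LinearMap.ker_eq_bot']
    intro w hw
    refine nondeg hF hp w fun i => ?_
    have := congrFun hw i
    simpa [A, C] using this
  refine ⟨(LinearEquiv.ofInjectiveEndo _ hinj).toContinuousLinearEquiv, ?_⟩
  ext1 w
  simp

lemma V_smooth {F : E n × E n → ℝ} (hF : IsFinsler F) {p : E n × E n} (hp : p ∈ U n) :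
    ContDiffAt ℝ 1 (V (fun p => F p ^ 2)) p := by
  have hs := smoothSq hF hp
  have h1 : ContDiffAt ℝ 1 (fderiv ℝ (fun p => F p ^ 2)) p :=
    (smooth_D hs).of_le (by exact_mod_cast le_top)
  have h2 : ContDiffAt ℝ 1 (fderiv ℝ (fderiv ℝ (fun p => F p ^ 2))) p :=
    (smooth_D2 hs).of_le (by exact_mod_cast le_top)
  have hA : ContDiffAt ℝ 1 (A (fun p => F p ^ 2)) p :=
    contDiffAt_const.clm_comp (h2.clm_comp contDiffAt_const)
  have hb : ContDiffAt ℝ 1 (b (fun p => F p ^ 2)) p := by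
    refine ((Cbase n).contDiff.contDiffAt.comp p h1).sub ((C n).contDiff.contDiffAt.comp p ?_)
    exact h2.clm_apply ((ContinuousLinearMap.contDiff _).contDiffAt.comp p contDiffAt_snd)
  obtain ⟨e, he⟩ := A_equiv hF hp
  have hi : ContDiffAt ℝ 1 (fun q => (A (fun p => F p ^ 2) q).inverse) p := by
    have := contDiffAt_map_inverse (n := 1) e
    rw [he] at this
    exact this.comp p hA
  exact contDiffAt_snd.prodMk (hi.clm_apply hb)

lemma V_eq {F : E n × E n → ℝ} (hF : IsFinsler F) {p : E n × E n} (hp : p ∈ U n) (i : Fin n) :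
    fderiv ℝ (fderiv ℝ (fun p => F p ^ 2)) p (V (fun p => F p ^ 2) p) (0, Pi.single i 1) =
      fderiv ℝ (fun p => F p ^ 2) p (Pi.single i 1, 0) := by
  obtain ⟨e, he⟩ := A_equiv hF hp
  have h : A (fun p => F p ^ 2) p (V (fun p => F p ^ 2) p).2 = b (fun p => F p ^ 2) p := by
    simp only [V]
    rw [← he, ContinuousLinearMap.inverse_equiv]
    simp
  have hi := congrFun h i
  simp only [A, b, C, Cbase, ContinuousLinearMap.comp_apply, ContinuousLinearMap.inr_apply,
    ContinuousLinearMap.inl_apply, ContinuousLinearMap.pi_apply, Pi.sub_apply,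
    ContinuousLinearMap.coe_pi', ContinuousLinearMap.apply_apply] at hi
  have hV : V (fun p => F p ^ 2) p = (p.2, 0) + (0, (V (fun p => F p ^ 2) p).2) := by
    simp [V]
  rw [hV, map_add, add_apply, hi]
  ring

lemma el_all {L : E n × E n → ℝ} {p v : E n × E n}
    (h : ∀ i, fderiv ℝ (fderiv ℝ L) p v (0, Pi.single i 1) = fderiv ℝ L p (Pi.single i 1, 0))
    (u : E n) : fderiv ℝ (fderiv ℝ L) p v (0, u) = fderiv ℝ L p (u, 0) := by
  rw [← sum_inl, ← sum_inr]
  simp [h]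

/-- Conservation of energy (infinitesimal form). -/
lemma energy {F : E n × E n → ℝ} (hF : IsFinsler F) {α : ℝ → E n × E n} {t : ℝ}
    (hU : ∀ᶠ s in 𝓝 t, α s ∈ U n)
    (hα : HasDerivAt α (V (fun p => F p ^ 2) (α t)) t) :
    HasDerivAt (fun s => F (α s) ^ 2) 0 t := by
  have hp := hU.self_of_nhds
  set v := V (fun p => F p ^ 2) (α t) with hv
  have h1 : HasDerivAt (fun s => F (α s) ^ 2) (fderiv ℝ (fun p => F p ^ 2) (α t) v) t :=
    ((smoothSq hF hp).differentiableAt (by simp)).hasFDerivAt.comp_hasDerivAt t hα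
  have h2 := (diff_D (smoothSq hF hp)).hasFDerivAt.comp_hasDerivAt t hα
  have hsnd : HasDerivAt (fun s => (α s).2) v.2 t := hα.snd
  have h3 : HasDerivAt (fun s => ((0, (α s).2) : E n × E n)) (0, v.2) t :=
    (hasDerivAt_const t (0 : E n)).prodMk hsnd
  have h4 := h2.clm_apply h3
  have h5 : HasDerivAt (fun s => 2 * F (α s) ^ 2)
      (2 * fderiv ℝ (fun p => F p ^ 2) (α t) v) t := h1.const_mul 2
  have h6 := h5.unique (h4.congr_of_eventuallyEq (by
    filter_upwards [hU] with s hs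
    exact (euler0 hF hs).symm))
  simp only [Function.comp] at h6
  rw [el_all (fun i => V_eq hF hp i), ← map_add] at h6
  have hvv : (((α t).2, 0) + (0, v.2) : E n × E n) = v := by simp [hv, V]
  rw [hvv] at h6
  have h7 : fderiv ℝ (fun p => F p ^ 2) (α t) v = 0 := by linarith
  rwa [h7] at h1

/-- Existence of geodesics. -/
lemma exists_geod {F : E n × E n → ℝ} (hF : IsFinsler F) {p : E n × E n} (hp : p ∈ U n) :
    ∃ α : ℝ → E n × E n, ∃ ε > 0, α 0 = p ∧
      ∀ t ∈ Set.Ioo (-ε) ε, α t ∈ U n ∧ HasDerivAt α (V (fun p => F p ^ 2) (α t)) t := by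
  obtain ⟨α, h0, ε, hε, h⟩ :=
    (V_smooth hF hp).exists_forall_mem_closedBall_exists_eq_forall_mem_Ioo_hasDerivAt₀ 0
  have hc : ContinuousAt α 0 := (h 0 (by simp [hε])).continuousAt
  have hU : ∀ᶠ t in 𝓝 (0:ℝ), α t ∈ U n :=
    hc.eventually (isOpen_U.mem_nhds (by rw [h0]; exact hp))
  obtain ⟨δ, hδ, hδU⟩ := Metric.eventually_nhds_iff.1 hU
  refine ⟨α, min ε δ, lt_min hε hδ, h0, fun t ht => ⟨hδU ?_, h t ?_⟩⟩
  · rw [Real.dist_eq, sub_zero, abs_lt]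
    have := min_le_right ε δ
    exact ⟨by linarith [ht.1], by linarith [ht.2]⟩
  · have := min_le_left ε δ
    exact ⟨by linarith [ht.1], by linarith [ht.2]⟩

end Fins

open Fins

theorem statement10 {n : ℕ} (F : E n × E n → ℝ) (hF : IsFinsler F) :
    ParamFlat F ↔
    (∀ (x y : E n), y ≠ 0 → ∀ i : Fin n,
      ∑ k, pdx k (pdy i (fun p => F p ^ 2)) (x, y) * y k =
        (1 / 2) * ∑ k, pdx i (pdy k (fun p => F p ^ 2)) (x, y) * y k) := by
  constructor
  · intro hPF x y hy i
    rw [cond_iff hF hy]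
    obtain ⟨α, ε, hε, h0, hα⟩ := exists_geod hF (p := (x, y)) hy
    set S := Set.Ioo (-ε) ε with hS
    have hSo : IsOpen S := isOpen_Ioo
    have h0S : (0:ℝ) ∈ S := by simp [hS, hε]
    have hfst : ∀ t ∈ S, HasDerivAt (fun s => (α s).1) (α t).2 t := fun t ht => (hα t ht).2.fst
    have hder : ∀ t ∈ S, deriv (fun s => (α s).1) t = (α t).2 := fun t ht => (hfst t ht).deriv
    have hαeq : ∀ t ∈ S, ((α t).1, deriv (fun s => (α s).1) t) = α t := by
      intro t ht; rw [hder t ht]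
    have hαc : ContinuousOn α S := fun t ht => (hα t ht).2.continuousAt.continuousWithinAt
    have hα1 : ContDiffOn ℝ 1 α S := by
      have h01 : ContDiffOn ℝ (0 + 1) α S := ?_
      · simpa using h01
      rw [contDiffOn_succ_iff_deriv_of_isOpen hSo]
      refine ⟨fun t ht => (hα t ht).2.differentiableAt.differentiableWithinAt, by simp, ?_⟩
      rw [contDiffOn_zero]
      have : ContinuousOn (fun t => V (fun p => F p ^ 2) (α t)) S := fun t ht =>
        ((V_smooth hF (hα t ht).1).continuousAt.comp
          (hα t ht).2.continuousAt).continuousWithinAt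
      exact this.congr fun t ht => (hα t ht).2.deriv
    have hgeo : IsGeodesic F (fun s => (α s).1) (-ε) ε := by
      have hnear : ∀ t ∈ S, ∀ᶠ s in 𝓝 t, s ∈ S := fun t ht => hSo.mem_nhds ht
      have hconst : ∀ t ∈ S, F (α t) = F (x, y) := by
        have hsq : ∀ t ∈ S, F (α t) ^ 2 = F (α 0) ^ 2 := by
          intro t ht
          have hen : ∀ t ∈ S, HasDerivAt (fun s => F (α s) ^ 2) 0 t := fun t ht =>
            energy hF ((hnear t ht).mono fun s hs => (hα s hs).1) (hα t ht).2
          exact hSo.is_const_of_deriv_eq_zero isPreconnected_Ioo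
            (fun t ht => (hen t ht).differentiableAt.differentiableWithinAt)
            (fun t ht => (hen t ht).deriv) ht h0S
        intro t ht
        have h1 := hsq t ht
        rw [h0] at h1
        have h2 : 0 < F (α t) := hF.pos (α t).1 (α t).2 (hα t ht).1
        have h3 := hF.pos x y hy
        exact (pow_left_inj₀ h2.le h3.le two_ne_zero).1 h1
      refine ⟨by linarith, ?_, ?_, ⟨F (x, y), hF.pos x y hy, ?_⟩, ?_⟩
      · have : ContDiffOn ℝ (1 + 1) (fun s => (α s).1) S := by
          rw [contDiffOn_succ_iff_deriv_of_isOpen hSo]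
          refine ⟨fun t ht => (hfst t ht).differentiableAt.differentiableWithinAt, by simp, ?_⟩
          exact (contDiff_snd.comp_contDiffOn hα1).congr hder
        exact this
      · intro t ht; rw [hder t ht]; exact (hα t ht).1
      · intro t ht; rw [hαeq t ht]; exact hconst t ht
      · intro i t ht
        rw [hαeq t ht]
        have h1 : (fun s => pdy i F ((α s).1, deriv (fun s => (α s).1) s)) =ᶠ[𝓝 t]
            fun s => pdy i F (α s) := by
          filter_upwards [hnear t ht] with s hs
          rw [hαeq s hs]
        rw [h1.deriv_eq, el_deriv hF (c := F (x, y))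
          ((hnear t ht).mono fun s hs => ⟨(hα s hs).1, hconst s hs⟩) (hα t ht).2,
          V_eq hF (hα t ht).1, pdx, fderiv_sq hF (hα t ht).1, hconst t ht]
    obtain ⟨a, b, ha, hab⟩ := hPF _ _ _ hgeo
    have hsnd : ∀ t ∈ S, (α t).2 = a := by
      intro t ht
      have h1 : HasDerivAt (fun s : ℝ => s • a + b) a t := by
        simpa using ((hasDerivAt_id t).smul_const a).add_const b
      refine (hfst t ht).unique (h1.congr_of_eventuallyEq ?_)
      filter_upwards [hSo.mem_nhds ht] with s hs using hab s hs
    have hw : (V (fun p => F p ^ 2) (α 0)).2 = 0 := by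
      have hs0 : HasDerivAt (fun s => (α s).2) (V (fun p => F p ^ 2) (α 0)).2 0 :=
        (hα 0 h0S).2.snd
      refine hs0.unique ((hasDerivAt_const (0:ℝ) a).congr_of_eventuallyEq ?_)
      filter_upwards [hSo.mem_nhds h0S] with s hs using hsnd s hs
    have hfin := V_eq hF (p := (x, y)) hy i
    rw [h0] at hw
    have hV : V (fun p => F p ^ 2) (x, y) = (y, 0) := Prod.ext rfl hw
    rwa [hV] at hfin
  · intro hH γ t₁ t₂ hγ
    set S := Set.Ioo t₁ t₂ with hS
    have hSo : IsOpen S := isOpen_Ioo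
    obtain ⟨c, hc, hcs⟩ := hγ.constSpeed
    have hsm : ContDiffOn ℝ (1 + 1) γ S := hγ.smooth
    rw [contDiffOn_succ_iff_deriv_of_isOpen hSo] at hsm
    obtain ⟨hd1, -, hd2⟩ := hsm
    have hg1 : ∀ t ∈ S, HasDerivAt γ (deriv γ t) t := fun t ht =>
      (hd1.differentiableAt (hSo.mem_nhds ht)).hasDerivAt
    have hg2 : ∀ t ∈ S, HasDerivAt (deriv γ) (deriv (deriv γ) t) t := fun t ht =>
      ((hd2.differentiableOn (by simp)).differentiableAt (hSo.mem_nhds ht)).hasDerivAt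
    have hz : ∀ t ∈ S, deriv (deriv γ) t = 0 := by
      intro t ht
      have hpU : (γ t, deriv γ t) ∈ U n := hγ.vel t ht
      have hU : ∀ᶠ s in 𝓝 t, (γ s, deriv γ s) ∈ U n ∧ F (γ s, deriv γ s) = c := by
        filter_upwards [hSo.mem_nhds ht] with s hs using ⟨hγ.vel s hs, hcs s hs⟩
      refine nondeg hF hpU _ fun i => ?_
      have h1 := hγ.eulerLagrange i t ht
      rw [el_deriv hF hU ((hg1 t ht).prodMk (hg2 t ht)), pdx, fderiv_sq hF hpU, hcs t ht] at h1
      have h2 := mul_left_cancel₀ (by positivity) h1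
      rw [← (cond_iff hF (hγ.vel t ht) i).1 (hH _ _ (hγ.vel t ht) i)] at h2
      have h3 : ((deriv γ t, deriv (deriv γ) t) : E n × E n) =
        (deriv γ t, 0) + (0, deriv (deriv γ) t) := by simp
      rw [h3, map_add, add_apply] at h2
      linarith
    have hm : (t₁ + t₂) / 2 ∈ S := by have := hγ.lt; constructor <;> linarith
    set m := (t₁ + t₂) / 2
    have hca : ∀ t ∈ S, deriv γ t = deriv γ m := fun t ht =>
      hSo.is_const_of_deriv_eq_zero isPreconnected_Ioo
        (fun t ht => (hg2 t ht).differentiableAt.differentiableWithinAt) hz ht hm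
    refine ⟨deriv γ m, γ m - m • deriv γ m, hγ.vel m hm, fun t ht => ?_⟩
    have hdd : ∀ t ∈ S, HasDerivAt (fun s => γ s - s • deriv γ m) 0 t := by
      intro t ht
      have := (hg1 t ht).sub ((hasDerivAt_id t).smul_const (deriv γ m))
      rw [hca t ht, one_smul, sub_self] at this
      exact this
    have := hSo.is_const_of_deriv_eq_zero isPreconnected_Ioo
        (fun t ht => (hdd t ht).differentiableAt.differentiableWithinAt)
        (fun t ht => (hdd t ht).deriv) ht hm
    rw [← this]; simp
end
end

section
/- Let F be a Finsler function on ℝⁿ such that (ℝⁿ, F) is projectively flat in a parameter-preserving manner in the standard coordinates, and assume that for every x ∈ ℝⁿ and every y ≠ 0 there exists a geodesic γ with γ(0) = x and γ'(0) = y. Then ∑_k ∂F/∂x^k(x,y)·y^k = 0 for every x ∈ ℝⁿ and every y ∈ ℝⁿ ∖ {0}. -/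
open scoped BigOperators Topology
noncomputable section

/-- if `(ℝⁿ, F)` is projectively flat in a parameter-preserving manner and
through every `(x, y)`, `y ≠ 0`, there passes a geodesic, then `∑_k ∂F/∂x^k · y^k = 0`. -/
theorem statement12 {n : ℕ} (F : E n × E n → ℝ) (hF : IsFinsler F)
    (hflat : ParamFlat F)
    (hexist : ∀ (x y : E n), y ≠ 0 → ∃ (γ : ℝ → E n) (t₁ t₂ : ℝ),
      t₁ < 0 ∧ 0 < t₂ ∧ IsGeodesic F γ t₁ t₂ ∧ γ 0 = x ∧ deriv γ 0 = y) :
    ∀ (x y : E n), y ≠ 0 → ∑ k, pdx k F (x, y) * y k = 0 := by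
  intro x y hy
  obtain ⟨γ, t₁, t₂, h1, h2, hg, hx, hdy⟩ := hexist x y hy
  obtain ⟨a, b, ha, hab⟩ := hflat γ t₁ t₂ hg
  obtain ⟨c, hc, hcs⟩ := hg.constSpeed
  have hline : ∀ t : ℝ, HasDerivAt (fun s : ℝ => s • a + b) a t := by
    intro t
    simpa using ((hasDerivAt_id t).smul_const a).add_const b
  have hd : ∀ t ∈ Set.Ioo t₁ t₂, deriv γ t = a := by
    intro t ht
    have he : γ =ᶠ[𝓝 t] fun s : ℝ => s • a + b := by
      filter_upwards [isOpen_Ioo.mem_nhds ht] with s hs using hab s hs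
    rw [he.deriv_eq, (hline t).deriv]
  have h0 : (0 : ℝ) ∈ Set.Ioo t₁ t₂ := ⟨h1, h2⟩
  have hay : a = y := by rw [← hd 0 h0, hdy]
  have hbx : b = x := by rw [← hx, hab 0 h0]; simp
  subst hay hbx
  have hopen : IsOpen {p : E n × E n | p.2 ≠ 0} :=
    isOpen_ne_fun continuous_snd continuous_const
  have hdiff : DifferentiableAt ℝ F (b, a) :=
    (hF.smooth.contDiffAt (hopen.mem_nhds hy)).differentiableAt (by simp)
  have hcurve : HasDerivAt (fun s : ℝ => ((s • a + b, a) : E n × E n)) (a, 0) 0 :=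
    (hline 0).prodMk (hasDerivAt_const _ _)
  have hF0 : HasFDerivAt F (fderiv ℝ F (b, a)) ((0 : ℝ) • a + b, a) := by
    simpa using hdiff.hasFDerivAt
  have hcomp := hF0.comp_hasDerivAt (0 : ℝ) hcurve
  have hconst : (F ∘ fun s : ℝ => ((s • a + b, a) : E n × E n)) =ᶠ[𝓝 0] fun _ => c := by
    filter_upwards [isOpen_Ioo.mem_nhds h0] with s hs
    have := hcs s hs
    rw [hd s hs, hab s hs] at this
    exact this
  have hzero : fderiv ℝ F (b, a) (a, 0) = 0 := by
    rw [← hcomp.deriv, hconst.deriv_eq]; simp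
  have hsum : ((a, 0) : E n × E n) = ∑ k, a k • ((Pi.single k 1, 0) : E n × E n) := by
    ext i
    · simp [Prod.fst_sum, Finset.sum_apply, Pi.single_apply]
    · simp [Prod.snd_sum, Finset.sum_apply]
  rw [hsum, map_sum] at hzero
  rw [← hzero]
  refine Finset.sum_congr rfl fun k _ => ?_
  rw [map_smul, smul_eq_mul, mul_comm]
  rfl
end
end
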